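/- arXiv:1808.00627 — 12 statements merged into one kernel-verified Lean document; each statement's English description precedes it below -/
import Mathlib

section
/- Under the block setup and outer setup, assume: (i) S_0 ≼ B_D ≼ (1+C²)·S_0 in the Loewner order for some constant C > 0; (ii) for each s ∈ {1,…,m}, ε_s ∈ (0,1], with ε_max = max_s ε_s and Σ_ε = diag(ε_1 I_{n_1},…,ε_m I_{n_m}); (iii) H_A is a real symmetric positive definite N×N matrix with β_1·A ≼ H_A^{−1} ≼ β_2·A for constants β_2 ≥ β_1 > 0. Define the saddle point matrix A_ε = [[A, Bᵀ],[B, −Σ_ε B_D − Q]] ∈ R^{(N+n)×(N+n)} and the block-diagonal preconditioner H = diag(H_A, (B_D+Q)^{−1}). Set r_max = (1+C²)·ε_max, μ̂_1 = (1−√5)/2, μ̂_2 = (1+√5)/2, μ̌_1 = ((1−r_max) − √((1−r_max)² + 4(1+r_max)))/2, α_min = min{β_1, 1}, α_max = max{β_2, 1+C²}, C_1 = μ̌_1/α_min, C_2 = μ̂_1/α_max, C_3 = 1/α_max, C_4 = μ̂_2/α_min, a = min{|C_2|, C_3}, b = max{|C_1|, C_4}. Then every eigenvalue λ of the matrix (H·A_ε)²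 is real and satisfies a² ≤ λ ≤ b². -/
open Matrix

/-- The all-ones vector `e` in `ℝ^k`. -/
noncomputable def onesV (k : ℕ) : Fin k → ℝ := fun _ => 1

/-- The rank-one block `Q_s = (1/d_s²) (M_s e_s)(M_s e_s)ᵀ`, where `d_s² = e_sᵀ M_s e_s`. -/
noncomputable def Qblk {k : ℕ} (M : Matrix (Fin k) (Fin k) ℝ) : Matrix (Fin k) (Fin k) ℝ :=
  (onesV k ⬝ᵥ M.mulVec (onesV k))⁻¹ • vecMulVec (M.mulVec (onesV k)) (M.mulVec (onesV k))

lemma scal_lower {U g s bd q t c μ β₂ K α h : ℝ}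
    (E1 : U + c = μ * g) (E2 : c - t - q = μ * (bd + q))
    (hU : 0 ≤ U) (hg : 0 ≤ g) (hs : 0 ≤ s) (hq : 0 ≤ q) (ht : 0 ≤ t)
    (hg2 : g ≤ β₂ * U) (hsb : s ≤ bd) (hbs : bd ≤ K * s)
    (hK : 1 ≤ K) (hαβ : β₂ ≤ α) (hαK : K ≤ α)
    (hpos : 0 < U + (bd + q))
    (hν : ∀ ν : ℝ, 0 ≤ ν → μ = -ν → s ≤ (1 + ν * β₂) * (U + ν * g))
    (hh0 : 0 < h) (hh : h ^ 2 + h = 1) : h ≤ |μ| * α := by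
  have hα : 0 < α := by linarith
  have hh1 : h < 1 := by nlinarith
  by_contra hcon
  push Not at hcon
  rcases lt_or_ge 0 μ with hμ | hμ
  · rw [abs_of_pos hμ] at hcon
    have h1 : U + t + q = μ * g - μ * (bd + q) := by linarith
    have h2 : μ * g ≤ μ * (α * U) := by
      apply mul_le_mul_of_nonneg_left _ hμ.le
      nlinarith
    have h3 : μ * (α * U) ≤ h * U := by nlinarith
    have h4 : 0 ≤ μ * (bd + q) := mul_nonneg hμ.le (by linarith)
    have hU0 : U = 0 := by nlinarith
    subst hU0
    have : 0 < μ * (bd + q) := by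
      apply mul_pos hμ; linarith
    nlinarith
  · obtain ⟨ν, rfl⟩ : ∃ ν, μ = -ν := ⟨-μ, by ring⟩
    have hν0 : 0 ≤ ν := by linarith
    rw [abs_neg, abs_of_nonneg hν0] at hcon
    have h1 := hν ν hν0 rfl
    have h2 : U + ν * g = ν * (bd + q) - t - q := by linarith
    have h3 : 0 ≤ U + ν * g := by positivity
    have h4 : s ≤ (1 + ν * α) * (U + ν * g) := by
      refine h1.trans (mul_le_mul_of_nonneg_right ?_ h3)
      nlinarith
    have h5 : ν * (bd + q) ≤ ν * (α * (s + q)) := by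
      apply mul_le_mul_of_nonneg_left _ hν0
      nlinarith
    set x := ν * α with hx
    have hx0 : 0 ≤ x := by positivity
    have h6 : U + ν * g ≤ x * (s + q) - q := by
      have : ν * (α * (s + q)) = x * (s + q) := by rw [hx]; ring
      linarith
    have h7 : s ≤ (1 + x) * (x * (s + q) - q) :=
      h4.trans (mul_le_mul_of_nonneg_left h6 (by linarith))
    have h8 : 0 < 1 - x - x ^ 2 := by nlinarith
    have h9 : 0 < (1 - x) * (1 + x) := by nlinarith
    have h10 : s * (1 - x - x ^ 2) + q * ((1 - x) * (1 + x)) ≤ 0 := by nlinarith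
    have h11 : 0 ≤ s * (1 - x - x ^ 2) := by positivity
    have h12 : 0 ≤ q * ((1 - x) * (1 + x)) := by positivity
    have hs0 : s = 0 := by
      have : s * (1 - x - x ^ 2) = 0 := by linarith
      rcases mul_eq_zero.mp this with h | h
      · exact h
      · linarith
    have hq0 : q = 0 := by
      have : q * ((1 - x) * (1 + x)) = 0 := by linarith
      rcases mul_eq_zero.mp this with h | h
      · exact h
      · linarith
    subst hs0 hq0
    have : 0 ≤ ν * g := by positivity
    nlinarith

lemma scal_upper {U g s bd q t c μ β₁ α r φ g0 b : ℝ}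
    (E1 : U + c = μ * g) (E2 : c - t - q = μ * (bd + q))
    (hU : 0 ≤ U) (hs : 0 ≤ s) (hq : 0 ≤ q) (ht : 0 ≤ t)
    (hg1 : β₁ * U ≤ g) (hsb : s ≤ bd) (htr : t ≤ r * s)
    (hα0 : 0 < α) (hαβ : α ≤ β₁) (hα1 : α ≤ 1)
    (hpos : 0 < U + (bd + q))
    (hk : ∀ k : ℝ, 0 ≤ U + 2 * k * c + k ^ 2 * s)
    (hφ0 : 1 ≤ φ) (hφ : φ ^ 2 = φ + 1)
    (hg0 : 0 ≤ g0) (hgr : (g0 - r) * (g0 + 1) = 1)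
    (hφb : φ ≤ b) (hgb : g0 ≤ b) : |μ| * α ≤ b := by
  have hsum : μ * (g + (bd + q)) = U + 2 * c - t - q := by linarith
  have hP : α * (U + (s + q)) ≤ g + (bd + q) := by nlinarith
  have hP' : α * (U + (bd + q)) ≤ g + (bd + q) := by nlinarith
  have hPpos : 0 < g + (bd + q) := lt_of_lt_of_le (mul_pos hα0 hpos) hP'
  have hup : U + 2 * c - t - q ≤ φ * (U + s) := by
    have h1 := hk (-φ)
    have h2 : 0 ≤ (φ - 1) * (U + 2 * (-φ) * c + (-φ) ^ 2 * s) := mul_nonneg (by linarith) h1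
    have h3 : (φ - 1) * (U + 2 * (-φ) * c + (-φ) ^ 2 * s) = (φ - 1) * U - 2 * c + φ * s := by
      linear_combination (-2 * c + s * (φ)) * hφ
    nlinarith
  have hlo : -(U + 2 * c - t - q) ≤ g0 * (U + s) + q := by
    have h1 := hk (g0 - r)
    have h2 : 0 ≤ (g0 + 1) * (U + 2 * (g0 - r) * c + (g0 - r) ^ 2 * s) :=
      mul_nonneg (by linarith) h1
    have h3 : (g0 + 1) * (U + 2 * (g0 - r) * c + (g0 - r) ^ 2 * s)
        = (g0 + 1) * U + 2 * c + (g0 - r) * s := by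
      linear_combination (2 * c + (g0 - r) * s) * hgr
    nlinarith
  have hb0 : 0 < b := by linarith
  have key : |μ| * (g + (bd + q)) ≤ b * (U + (s + q)) := by
    rw [← abs_of_pos hPpos, ← abs_mul, hsum]
    rw [abs_le]
    constructor <;> nlinarith [mul_nonneg (sub_nonneg.2 hφb) hU, mul_nonneg (sub_nonneg.2 hφb) hs,
      mul_nonneg (sub_nonneg.2 hgb) hU, mul_nonneg (sub_nonneg.2 hgb) hs]
  have h5 : |μ| * α * (g + (bd + q)) ≤ b * (g + (bd + q)) := by
    nlinarith
  exact le_of_mul_le_mul_right h5 hPpos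

lemma psd_nn {ι : Type*} [Fintype ι] {X : Matrix ι ι ℝ} (h : X.PosSemidef) (v : ι → ℝ) :
    0 ≤ v ⬝ᵥ X *ᵥ v := by
  simpa using h.dotProduct_mulVec_nonneg v

lemma herm_swap {ι : Type*} [Fintype ι] {X : Matrix ι ι ℝ} (h : X.IsHermitian) (v w : ι → ℝ) :
    v ⬝ᵥ X *ᵥ w = w ⬝ᵥ X *ᵥ v := by
  have hT : Xᵀ = X := by simpa [Matrix.IsHermitian] using h
  rw [dotProduct_mulVec, ← mulVec_transpose, hT, dotProduct_comm]

lemma quad_add {ι : Type*} [Fintype ι] {X : Matrix ι ι ℝ} (h : X.IsHermitian) (v w : ι → ℝ)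
    (k : ℝ) : (v + k • w) ⬝ᵥ X *ᵥ (v + k • w)
      = v ⬝ᵥ X *ᵥ v + 2 * k * (w ⬝ᵥ X *ᵥ v) + k ^ 2 * (w ⬝ᵥ X *ᵥ w) := by
  simp only [mulVec_add, mulVec_smul, add_dotProduct, dotProduct_add, smul_dotProduct,
    dotProduct_smul, smul_eq_mul, herm_swap h v w]
  ring

lemma core {ι κ : Type*} [Fintype ι] [Fintype κ] [DecidableEq ι] [DecidableEq κ]
    {A G : Matrix ι ι ℝ} {B : Matrix κ ι ℝ} {BD Q SB S0 : Matrix κ κ ℝ}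
    {β₁ β₂ K e μ α α' h φ g0 b : ℝ} {u : ι → ℝ} {p : κ → ℝ}
    (hA : A.PosDef) (hG : G.PosDef)
    (hG1 : (G - β₁ • A).PosSemidef) (hG2 : (β₂ • A - G).PosSemidef)
    (hS0 : S0 = B * A⁻¹ * Bᵀ)
    (hL1 : (BD - S0).PosSemidef) (hL2 : (K • S0 - BD).PosSemidef)
    (hQ : Q.PosSemidef) (hSB : SB.PosSemidef) (hSB2 : (e • BD - SB).PosSemidef)
    (hW : (BD + Q).PosDef)
    (hne : u ≠ 0 ∨ p ≠ 0)
    (eq1 : A *ᵥ u + Bᵀ *ᵥ p = μ • G *ᵥ u)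
    (eq2 : B *ᵥ u - SB *ᵥ p - Q *ᵥ p = μ • (BD + Q) *ᵥ p)
    (he : 0 ≤ e) (hK : 1 ≤ K) (hβ₂ : 0 < β₂) (hαβ : β₂ ≤ α) (hαK : K ≤ α)
    (hh0 : 0 < h) (hh : h ^ 2 + h = 1)
    (hα0 : 0 < α') (hαβ' : α' ≤ β₁) (hα1 : α' ≤ 1)
    (hφ0 : 1 ≤ φ) (hφ : φ ^ 2 = φ + 1)
    (hg0 : 0 ≤ g0) (hgr : (g0 - K * e) * (g0 + 1) = 1)
    (hφb : φ ≤ b) (hgb : g0 ≤ b) : h ≤ |μ| * α ∧ |μ| * α' ≤ b := by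
  have hAu : IsUnit A.det := (Matrix.isUnit_iff_isUnit_det A).1 hA.isUnit
  set z : ι → ℝ := A⁻¹ *ᵥ Bᵀ *ᵥ p with hz
  have hAz : A *ᵥ z = Bᵀ *ᵥ p := by
    rw [hz, mulVec_mulVec, mul_nonsing_inv _ hAu, one_mulVec]
  have hBt : ∀ w : ι → ℝ, w ⬝ᵥ Bᵀ *ᵥ p = p ⬝ᵥ B *ᵥ w := by
    intro w
    rw [mulVec_transpose, dotProduct_comm, ← dotProduct_mulVec]
  have hs : p ⬝ᵥ S0 *ᵥ p = z ⬝ᵥ A *ᵥ z := by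
    rw [hAz, hBt, hS0, hz, mulVec_mulVec, mulVec_mulVec]
  have hzu : z ⬝ᵥ A *ᵥ u = p ⬝ᵥ B *ᵥ u := by
    rw [herm_swap hA.1, hAz, hBt]
  have E1 : u ⬝ᵥ A *ᵥ u + p ⬝ᵥ B *ᵥ u = μ * (u ⬝ᵥ G *ᵥ u) := by
    have := congrArg (fun y => u ⬝ᵥ y) eq1
    simpa [dotProduct_add, hBt] using this
  have E2 : p ⬝ᵥ B *ᵥ u - p ⬝ᵥ SB *ᵥ p - p ⬝ᵥ Q *ᵥ p
      = μ * (p ⬝ᵥ BD *ᵥ p + p ⬝ᵥ Q *ᵥ p) := by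
    have := congrArg (fun y => p ⬝ᵥ y) eq2
    simpa [dotProduct_sub, add_mulVec, dotProduct_add, mul_add] using this
  have hU := psd_nn hA.posSemidef u
  have hg := psd_nn hG.posSemidef u
  have hs0 := psd_nn hA.posSemidef z
  have hq := psd_nn hQ p
  have ht := psd_nn hSB p
  have hg1 := psd_nn hG1 u
  have hg2 : ∀ w : ι → ℝ, w ⬝ᵥ G *ᵥ w ≤ β₂ * (w ⬝ᵥ A *ᵥ w) := by
    intro w
    have := psd_nn hG2 w
    simp only [sub_mulVec, smul_mulVec, dotProduct_sub, dotProduct_smul, smul_eq_mul] at this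
    linarith
  have hl1 := psd_nn hL1 p
  have hl2 := psd_nn hL2 p
  have hb2 := psd_nn hSB2 p
  simp only [sub_mulVec, smul_mulVec, dotProduct_sub, dotProduct_smul, smul_eq_mul, hs]
    at hg1 hl1 hl2 hb2
  have hw := psd_nn hW.posSemidef p
  simp only [add_mulVec, dotProduct_add] at hw
  have hpos : 0 < u ⬝ᵥ A *ᵥ u + (p ⬝ᵥ BD *ᵥ p + p ⬝ᵥ Q *ᵥ p) := by
    rcases hne with hu | hp
    · have : 0 < u ⬝ᵥ A *ᵥ u := by simpa using hA.dotProduct_mulVec_pos hu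
      linarith
    · have : 0 < p ⬝ᵥ (BD + Q) *ᵥ p := by simpa using hW.dotProduct_mulVec_pos hp
      simp only [add_mulVec, dotProduct_add] at this
      linarith
  have hk : ∀ k : ℝ, 0 ≤ u ⬝ᵥ A *ᵥ u + 2 * k * (p ⬝ᵥ B *ᵥ u) + k ^ 2 * (z ⬝ᵥ A *ᵥ z) := by
    intro k
    have := psd_nn hA.posSemidef (u + k • z)
    rwa [quad_add hA.1, hzu] at this
  have htr : p ⬝ᵥ SB *ᵥ p ≤ K * e * (z ⬝ᵥ A *ᵥ z) := by nlinarith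
  constructor
  · refine scal_lower E1 E2 hU hg hs0 hq ht (hg2 u) (by linarith) (by linarith) hK hαβ hαK hpos
      ?_ hh0 hh
    intro ν hν hμ
    have hc : 0 < 1 + ν * β₂ := by positivity
    have h1 := psd_nn hA.posSemidef (z + (1 + ν * β₂) • u)
    have h2 := psd_nn hG.posSemidef (z + (1 + ν * β₂) • u)
    rw [quad_add hA.1] at h1
    rw [quad_add hG.1] at h2
    have h3 : u ⬝ᵥ A *ᵥ z + ν * (u ⬝ᵥ G *ᵥ z) = - (z ⬝ᵥ A *ᵥ z) := by
      have := congrArg (fun y => z ⬝ᵥ y) eq1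
      simp only [dotProduct_add, dotProduct_smul, smul_eq_mul, ← hAz, hμ] at this
      rw [herm_swap hA.1 u z, herm_swap hG.1 u z]
      linarith
    have h4 := hg2 z
    have h5 : ν * (z ⬝ᵥ G *ᵥ z) ≤ ν * (β₂ * (z ⬝ᵥ A *ᵥ z)) := mul_le_mul_of_nonneg_left h4 hν
    have h6 := mul_nonneg hν h2
    have h7 : (1 + ν * β₂) * (z ⬝ᵥ A *ᵥ z) ≤
        (1 + ν * β₂) * ((1 + ν * β₂) * (u ⬝ᵥ A *ᵥ u + ν * (u ⬝ᵥ G *ᵥ u))) := by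
      have h8 : 2 * (1 + ν * β₂) * (u ⬝ᵥ A *ᵥ z + ν * (u ⬝ᵥ G *ᵥ z))
        = 2 * (1 + ν * β₂) * (- (z ⬝ᵥ A *ᵥ z)) := by rw [h3]
      linarith
    exact le_of_mul_le_mul_left h7 hc
  · exact scal_upper E1 E2 hU hs0 hq ht (by linarith) (by linarith) htr hα0 hαβ' hα1 hpos hk
      hφ0 hφ hg0 hgr hφb hgb

lemma eig_sq {ι : Type*} [Fintype ι] [DecidableEq ι] {T P : Matrix ι ι ℝ}
    (hP : P.PosDef) (hPT : (P * T).IsHermitian) {lam : ℂ} {x : ι → ℂ} (hx : x ≠ 0)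
    (h : ((T ^ 2).map Complex.ofReal) *ᵥ x = lam • x) :
    ∃ (μ : ℝ) (v : ι → ℝ), v ≠ 0 ∧ T *ᵥ v = μ • v ∧ lam = ((μ ^ 2 : ℝ) : ℂ) := by
  obtain ⟨ρ, hρ⟩ : ∃ ρ : ℂ, lam = ρ ^ 2 := by
    obtain ⟨ρ, hρ⟩ := IsAlgClosed.exists_pow_nat_eq lam (n := 2) (by norm_num)
    exact ⟨ρ, hρ.symm⟩
  have hmap : (T ^ 2).map Complex.ofReal = T.map Complex.ofReal * T.map Complex.ofReal := by
    rw [pow_two]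
    exact Matrix.map_mul (f := Complex.ofRealHom)
  rw [hmap, ← mulVec_mulVec] at h
  set Tc := T.map Complex.ofReal with hTc
  obtain ⟨μ, y, hy, hTy, hlam⟩ : ∃ (μ : ℂ) (y : ι → ℂ), y ≠ 0 ∧ Tc *ᵥ y = μ • y ∧ lam = μ ^ 2 := by
    by_cases h0 : Tc *ᵥ x + ρ • x = 0
    · exact ⟨-ρ, x, hx, by rw [neg_smul]; exact eq_neg_of_add_eq_zero_left h0, by rw [hρ]; ring⟩
    · refine ⟨ρ, _, h0, ?_, hρ⟩
      rw [mulVec_add, h, mulVec_smul, hρ, smul_add, smul_smul, pow_two, add_comm]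
  set y1 : ι → ℝ := fun i => (y i).re with hy1
  set y2 : ι → ℝ := fun i => (y i).im with hy2
  have e1 : T *ᵥ y1 = μ.re • y1 - μ.im • y2 := by
    ext i
    have := congrArg Complex.re (congrFun hTy i)
    simpa [hTc, mulVec, dotProduct, Complex.re_sum, hy1, hy2] using this
  have e2 : T *ᵥ y2 = μ.im • y1 + μ.re • y2 := by
    ext i
    have := congrArg Complex.im (congrFun hTy i)
    simp [hTc, mulVec, dotProduct, Complex.im_sum] at this
    simp [mulVec, dotProduct, hy1, hy2, this]
    ring
  have hne : y1 ≠ 0 ∨ y2 ≠ 0 := by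
    by_contra hcon
    push Not at hcon
    apply hy
    ext i
    exact Complex.ext (congrFun hcon.1 i) (congrFun hcon.2 i)
  have him : μ.im = 0 := by
    have hsw := herm_swap hPT y2 y1
    rw [← mulVec_mulVec, ← mulVec_mulVec, e1, e2] at hsw
    simp only [mulVec_add, mulVec_sub, mulVec_smul, dotProduct_add, dotProduct_sub,
      dotProduct_smul, smul_eq_mul, herm_swap hP.1 y2 y1] at hsw
    have h0 : μ.im * (y1 ⬝ᵥ P *ᵥ y1 + y2 ⬝ᵥ P *ᵥ y2) = 0 := by linarith
    have hp : 0 < y1 ⬝ᵥ P *ᵥ y1 + y2 ⬝ᵥ P *ᵥ y2 := by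
      have a1 := psd_nn hP.posSemidef y1
      have a2 := psd_nn hP.posSemidef y2
      rcases hne with h | h
      · have : 0 < y1 ⬝ᵥ P *ᵥ y1 := by simpa using hP.dotProduct_mulVec_pos h
        linarith
      · have : 0 < y2 ⬝ᵥ P *ᵥ y2 := by simpa using hP.dotProduct_mulVec_pos h
        linarith
    rcases mul_eq_zero.1 h0 with h | h
    · exact h
    · linarith
  have hμ : lam = ((μ.re ^ 2 : ℝ) : ℂ) := by
    have : μ = (μ.re : ℂ) := Complex.ext (by simp) (by simp [him])
    rw [hlam]; rw [this]; push_cast; simp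
  rw [him] at e1 e2
  rcases hne with h | h
  · exact ⟨μ.re, y1, h, by simpa using e1, hμ⟩
  · exact ⟨μ.re, y2, h, by simpa using e2, hμ⟩

section Blocks
variable {m : ℕ} {ns : Fin m → ℕ}

lemma bd_quad (X : ∀ s : Fin m, Matrix (Fin (ns s)) (Fin (ns s)) ℝ) (v : (Σ s, Fin (ns s)) → ℝ) :
    v ⬝ᵥ blockDiagonal' X *ᵥ v = ∑ s, (fun i => v ⟨s, i⟩) ⬝ᵥ X s *ᵥ (fun i => v ⟨s, i⟩) := by
  simp only [dotProduct, mulVec, Fintype.sum_sigma]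
  refine Finset.sum_congr rfl fun s _ => Finset.sum_congr rfl fun i _ => ?_
  congr 1
  rw [Finset.sum_eq_single s]
  · simp [blockDiagonal'_apply_eq]
  · intro t _ hts
    refine Finset.sum_eq_zero fun j _ => ?_
    rw [blockDiagonal'_apply_ne _ _ _ (Ne.symm hts), zero_mul]
  · simp

lemma bd_herm {X : ∀ s : Fin m, Matrix (Fin (ns s)) (Fin (ns s)) ℝ}
    (h : ∀ s, (X s).IsHermitian) : (blockDiagonal' X).IsHermitian := by
  rw [Matrix.IsHermitian, blockDiagonal'_conjTranspose]
  congr 1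
  funext s
  exact h s

lemma bd_psd {X : ∀ s : Fin m, Matrix (Fin (ns s)) (Fin (ns s)) ℝ}
    (h : ∀ s, (X s).PosSemidef) : (blockDiagonal' X).PosSemidef := by
  refine PosSemidef.of_dotProduct_mulVec_nonneg (bd_herm fun s => (h s).1) fun v => ?_
  rw [star_trivial, bd_quad]
  exact Finset.sum_nonneg fun s _ => psd_nn (h s) _

lemma bd_pd {X : ∀ s : Fin m, Matrix (Fin (ns s)) (Fin (ns s)) ℝ}
    (h : ∀ s, (X s).PosDef) : (blockDiagonal' X).PosDef := by
  refine PosDef.of_dotProduct_mulVec_pos (bd_herm fun s => (h s).1) fun v hv => ?_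
  rw [star_trivial, bd_quad]
  obtain ⟨⟨s, i⟩, hi⟩ := Function.ne_iff.1 hv
  refine Finset.sum_pos' (fun s _ => psd_nn (h s).posSemidef _) ⟨s, Finset.mem_univ _, ?_⟩
  have : (fun i => v ⟨s, i⟩) ≠ 0 := fun h0 => hi (congrFun h0 i)
  simpa using (h s).dotProduct_mulVec_pos this

end Blocks

lemma Qblk_quad {k : ℕ} (M : Matrix (Fin k) (Fin k) ℝ) (v : Fin k → ℝ) :
    v ⬝ᵥ Qblk M *ᵥ v = (onesV k ⬝ᵥ M *ᵥ onesV k)⁻¹ * (v ⬝ᵥ M *ᵥ onesV k) ^ 2 := by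
  rw [Qblk, smul_mulVec, dotProduct_smul, smul_eq_mul, vecMulVec_mulVec]
  simp [dotProduct_comm v (M *ᵥ onesV k)]
  left; ring

lemma Qblk_psd {k : ℕ} {M : Matrix (Fin k) (Fin k) ℝ} (hM : M.PosDef) :
    (Qblk M).PosSemidef := by
  have hd := psd_nn hM.posSemidef (onesV k)
  refine PosSemidef.of_dotProduct_mulVec_nonneg ?_ fun v => ?_
  · rw [Matrix.IsHermitian]
    ext i j
    simp [Qblk, vecMulVec_apply, mul_comm]
  · rw [star_trivial, Qblk_quad]
    positivity

lemma blk_pd {k : ℕ} (hk : 0 < k) {M Bb : Matrix (Fin k) (Fin k) ℝ} (hM : M.PosDef)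
    (hB : Bb.PosSemidef) (hker : LinearMap.ker Bb.mulVecLin = Submodule.span ℝ {onesV k}) :
    (Bb + Qblk M).PosDef := by
  refine PosDef.of_dotProduct_mulVec_pos (hB.1.add (Qblk_psd hM).1) fun v hv => ?_
  rw [star_trivial, add_mulVec, dotProduct_add]
  have h1 := psd_nn hB v
  have h2 := psd_nn (Qblk_psd hM) v
  by_contra hcon
  have h3 : v ⬝ᵥ Bb *ᵥ v = 0 := by linarith
  have h4 : v ⬝ᵥ Qblk M *ᵥ v = 0 := by linarith
  have h5 : Bb *ᵥ v = 0 := (hB.dotProduct_mulVec_zero_iff v).1 (by simpa using h3)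
  have h6 : v ∈ LinearMap.ker Bb.mulVecLin := by simpa using h5
  rw [hker, Submodule.mem_span_singleton] at h6
  obtain ⟨c, rfl⟩ := h6
  have hone : onesV k ≠ 0 := fun h => hv (by simp [h])
  have hd : 0 < onesV k ⬝ᵥ M *ᵥ onesV k := by simpa using hM.dotProduct_mulVec_pos hone
  rw [Qblk_quad, smul_dotProduct, smul_eq_mul] at h4
  have hc : c ≠ 0 := fun h => hv (by simp [h])
  have : 0 < (onesV k ⬝ᵥ M *ᵥ onesV k)⁻¹ * (c * (onesV k ⬝ᵥ M *ᵥ onesV k)) ^ 2 := by positivity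
  linarith

/-- with the block-diagonal preconditioner `H = diag(H_A, (B_D+Q)⁻¹)`,
every eigenvalue of `(H·A_ε)²` is real and lies in `[a², b²]`. -/
theorem stmt0
    (m : ℕ) (hm : 1 ≤ m) (ns : Fin m → ℕ) (hns : ∀ s, 0 < ns s)
    (M Bb : ∀ s : Fin m, Matrix (Fin (ns s)) (Fin (ns s)) ℝ)
    (hM : ∀ s, (M s).PosDef) (hBb : ∀ s, (Bb s).PosSemidef)
    (hker : ∀ s, LinearMap.ker (Bb s).mulVecLin = Submodule.span ℝ {onesV (ns s)})
    (n0 : ℕ) (hn0 : 1 ≤ n0)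
    (A : Matrix ((Σ s, Fin (ns s)) ⊕ Fin n0) ((Σ s, Fin (ns s)) ⊕ Fin n0) ℝ)
    (hA : A.PosDef)
    (BD Q : Matrix (Σ s, Fin (ns s)) (Σ s, Fin (ns s)) ℝ)
    (hBD : BD = blockDiagonal' Bb)
    (hQ : Q = blockDiagonal' fun s => Qblk (M s))
    (B : Matrix (Σ s, Fin (ns s)) ((Σ s, Fin (ns s)) ⊕ Fin n0) ℝ)
    (hB : B = fromCols BD 0)
    (S0 : Matrix (Σ s, Fin (ns s)) (Σ s, Fin (ns s)) ℝ)
    (hS0 : S0 = B * A⁻¹ * Bᵀ)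
    -- (i) Loewner bounds  S₀ ≼ B_D ≼ (1+C²)·S₀
    (C : ℝ) (hC : 0 < C)
    (hLoe1 : (BD - S0).PosSemidef)
    (hLoe2 : ((1 + C ^ 2) • S0 - BD).PosSemidef)
    -- (ii) the contrast parameters
    (ε : Fin m → ℝ) (hε : ∀ s, 0 < ε s ∧ ε s ≤ 1)
    (εmax : ℝ) (hεub : ∀ s, ε s ≤ εmax) (hεmem : ∃ s, ε s = εmax)
    (Sig : Matrix (Σ s, Fin (ns s)) (Σ s, Fin (ns s)) ℝ)
    (hSig : Sig = blockDiagonal' fun s => ε s • (1 : Matrix (Fin (ns s)) (Fin (ns s)) ℝ))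
    -- (iii) the preconditioner block H_A with β₁·A ≼ H_A⁻¹ ≼ β₂·A
    (HA : Matrix ((Σ s, Fin (ns s)) ⊕ Fin n0) ((Σ s, Fin (ns s)) ⊕ Fin n0) ℝ)
    (hHA : HA.PosDef) (β₁ β₂ : ℝ) (hβ₁ : 0 < β₁) (hβ₁₂ : β₁ ≤ β₂)
    (hHb1 : (HA⁻¹ - β₁ • A).PosSemidef) (hHb2 : (β₂ • A - HA⁻¹).PosSemidef)
    -- the saddle point matrix and the preconditioner
    (Aε : Matrix (((Σ s, Fin (ns s)) ⊕ Fin n0) ⊕ (Σ s, Fin (ns s)))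
          (((Σ s, Fin (ns s)) ⊕ Fin n0) ⊕ (Σ s, Fin (ns s))) ℝ)
    (hAε : Aε = fromBlocks A Bᵀ B (-(Sig * BD) - Q))
    (H : Matrix (((Σ s, Fin (ns s)) ⊕ Fin n0) ⊕ (Σ s, Fin (ns s)))
         (((Σ s, Fin (ns s)) ⊕ Fin n0) ⊕ (Σ s, Fin (ns s))) ℝ)
    (hH : H = fromBlocks HA 0 0 (BD + Q)⁻¹)
    -- the constants
    (rmax μh1 μh2 μc1 αmin αmax C1 C2 C3 C4 a b : ℝ)
    (hrmax : rmax = (1 + C ^ 2) * εmax)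
    (hμh1 : μh1 = (1 - Real.sqrt 5) / 2) (hμh2 : μh2 = (1 + Real.sqrt 5) / 2)
    (hμc1 : μc1 = ((1 - rmax) - Real.sqrt ((1 - rmax) ^ 2 + 4 * (1 + rmax))) / 2)
    (hαmin : αmin = min β₁ 1) (hαmax : αmax = max β₂ (1 + C ^ 2))
    (hC1 : C1 = μc1 / αmin) (hC2 : C2 = μh1 / αmax)
    (hC3 : C3 = 1 / αmax) (hC4 : C4 = μh2 / αmin)
    (ha : a = min |C2| C3) (hb : b = max |C1| C4) :
    ∀ (lam : ℂ) (x : (((Σ s, Fin (ns s)) ⊕ Fin n0) ⊕ (Σ s, Fin (ns s))) → ℂ),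
      x ≠ 0 → (((H * Aε) ^ 2).map Complex.ofReal).mulVec x = lam • x →
      lam.im = 0 ∧ a ^ 2 ≤ lam.re ∧ lam.re ≤ b ^ 2 := by
  intro lam x hx hlam
  have hWeq : BD + Q = blockDiagonal' fun s => Bb s + Qblk (M s) := by
    rw [hBD, hQ, ← blockDiagonal'_add]; rfl
  have hW : (BD + Q).PosDef := by
    rw [hWeq]
    exact bd_pd fun s => blk_pd (hns s) (hM s) (hBb s) (hker s)
  have hQp : Q.PosSemidef := by rw [hQ]; exact bd_psd fun s => Qblk_psd (hM s)
  have hBDp : BD.PosSemidef := by rw [hBD]; exact bd_psd hBb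
  have hSBeq : Sig * BD = blockDiagonal' fun s => ε s • Bb s := by
    rw [hSig, hBD, ← blockDiagonal'_mul]
    congr 1
    funext s
    simp
  have hSB : (Sig * BD).PosSemidef := by
    rw [hSBeq]; exact bd_psd fun s => (hBb s).smul (hε s).1.le
  have hSB2 : (εmax • BD - Sig * BD).PosSemidef := by
    have : εmax • BD - Sig * BD = blockDiagonal' fun s => (εmax - ε s) • Bb s := by
      rw [hSBeq, hBD, ← blockDiagonal'_smul, ← blockDiagonal'_sub]
      congr 1
      funext s
      simp [sub_smul]
    rw [this]
    exact bd_psd fun s => (hBb s).smul (sub_nonneg.2 (hεub s))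
  have hεpos : 0 < εmax := by
    obtain ⟨s, hs⟩ := hεmem
    rw [← hs]; exact (hε s).1
  have hHAu : IsUnit HA.det := (Matrix.isUnit_iff_isUnit_det HA).1 hHA.isUnit
  have hWu : IsUnit (BD + Q).det := (Matrix.isUnit_iff_isUnit_det _).1 hW.isUnit
  have hG : (HA⁻¹).PosDef := hHA.inv
  set P := fromBlocks HA⁻¹ 0 0 (BD + Q) with hPdef
  have hPH : P * H = 1 := by
    rw [hPdef, hH, fromBlocks_multiply]
    simp [nonsing_inv_mul _ hHAu, mul_nonsing_inv _ hWu]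
  have hKherm : Aε.IsHermitian := by
    rw [hAε]
    refine IsHermitian.fromBlocks hA.1 ?_ (hSB.1.neg.sub hQp.1)
    simp [conjTranspose_eq_transpose_of_trivial]
  have hPP : P.PosDef := by
    refine PosDef.of_dotProduct_mulVec_pos (IsHermitian.fromBlocks hG.1 (by simp) hW.1) ?_
    intro v hv
    obtain ⟨u, p, rfl⟩ : ∃ u p, v = Sum.elim u p :=
      ⟨v ∘ Sum.inl, v ∘ Sum.inr, (Sum.elim_comp_inl_inr v).symm⟩
    rw [star_trivial, hPdef, fromBlocks_mulVec]
    simp only [Sum.elim_comp_inl, Sum.elim_comp_inr, zero_mulVec, add_zero, zero_add,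
      sumElim_dotProduct_sumElim]
    have a1 := psd_nn hG.posSemidef u
    have a2 := psd_nn hW.posSemidef p
    by_cases hu : u = 0
    · have hp : p ≠ 0 := by
        rintro rfl
        apply hv
        rw [hu]
        ext i
        cases i <;> rfl
      have : 0 < p ⬝ᵥ (BD + Q) *ᵥ p := by simpa using hW.dotProduct_mulVec_pos hp
      linarith
    · have : 0 < u ⬝ᵥ HA⁻¹ *ᵥ u := by simpa using hG.dotProduct_mulVec_pos hu
      linarith
  have hPT : P * (H * Aε) = Aε := by rw [← Matrix.mul_assoc, hPH, Matrix.one_mul]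
  obtain ⟨μ, v, hv, hTv, hlamμ⟩ := eig_sq hPP (by rw [hPT]; exact hKherm) hx hlam
  have hKv : Aε *ᵥ v = μ • P *ᵥ v := by
    rw [← hPT, ← mulVec_mulVec, hTv, mulVec_smul]
  obtain ⟨u, p, rfl⟩ : ∃ u p, v = Sum.elim u p :=
    ⟨v ∘ Sum.inl, v ∘ Sum.inr, (Sum.elim_comp_inl_inr v).symm⟩
  rw [hAε, hPdef, fromBlocks_mulVec, fromBlocks_mulVec] at hKv
  simp only [Sum.elim_comp_inl, Sum.elim_comp_inr, zero_mulVec, add_zero, zero_add] at hKv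
  have eq1 : A *ᵥ u + Bᵀ *ᵥ p = μ • HA⁻¹ *ᵥ u := by
    ext i
    exact congrFun hKv (Sum.inl i)
  have eq2 : B *ᵥ u - (Sig * BD) *ᵥ p - Q *ᵥ p = μ • (BD + Q) *ᵥ p := by
    ext i
    have := congrFun hKv (Sum.inr i)
    simp only [Sum.elim_inr, sub_mulVec, neg_mulVec, Pi.add_apply, Pi.sub_apply, Pi.neg_apply,
      Pi.smul_apply] at this ⊢
    rw [← this]; ring
  have hne : u ≠ 0 ∨ p ≠ 0 := by
    by_contra hcon
    push Not at hcon
    apply hv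
    rw [hcon.1, hcon.2]
    ext i
    cases i <;> rfl
  have h5 : Real.sqrt 5 ^ 2 = 5 := Real.sq_sqrt (by norm_num)
  have h5' : 2 < Real.sqrt 5 := by
    rw [Real.lt_sqrt (by norm_num)]; norm_num
  have hr0 : 0 < rmax := by rw [hrmax]; positivity
  set D := Real.sqrt ((1 - rmax) ^ 2 + 4 * (1 + rmax)) with hD
  have hD2 : D ^ 2 = (1 - rmax) ^ 2 + 4 * (1 + rmax) := Real.sq_sqrt (by positivity)
  have hD0 : 0 ≤ D := Real.sqrt_nonneg _
  have hμc0 : μc1 ≤ 0 := by rw [hμc1]; nlinarith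
  have hαmin0 : 0 < αmin := by rw [hαmin]; exact lt_min hβ₁ one_pos
  have hαmax0 : 0 < αmax := by rw [hαmax]; exact lt_max_of_lt_left (hβ₁.trans_le hβ₁₂)
  have hβ₂ : 0 < β₂ := hβ₁.trans_le hβ₁₂
  obtain ⟨hlow, hupp⟩ := core (α := αmax) (α' := αmin) (h := -μh1) (φ := μh2) (g0 := -μc1)
    (b := max (-μc1) μh2) hA hG hHb1 hHb2 hS0 hLoe1 hLoe2 hQp hSB hSB2 hW hne eq1 eq2
    hεpos.le (by nlinarith) hβ₂ (hαmax ▸ le_max_left _ _) (hαmax ▸ le_max_right _ _)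
    (by rw [hμh1]; linarith) (by rw [hμh1]; linear_combination h5 / 4)
    hαmin0 (hαmin ▸ min_le_left _ _) (hαmin ▸ min_le_right _ _)
    (by rw [hμh2]; linarith) (by rw [hμh2]; linear_combination h5 / 4)
    (by linarith) (by rw [← hrmax, hμc1]; linear_combination hD2 / 4)
    (le_max_right _ _) (le_max_left _ _)
  have hale : a ≤ |μ| := by
    rw [ha]
    refine (min_le_left _ _).trans ?_
    rw [hC2, abs_div, abs_of_pos hαmax0, abs_of_neg (by rw [hμh1]; linarith)]
    rwa [div_le_iff₀ hαmax0]
  have hbge : |μ| ≤ b := by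
    have h1 : |μ| ≤ max (-μc1) μh2 / αmin := by rwa [le_div_iff₀ hαmin0]
    refine h1.trans ?_
    rw [hb, hC1, hC4, abs_div, abs_of_pos hαmin0, abs_of_nonpos hμc0, max_div_div_right hαmin0.le]
  have ha0 : 0 ≤ a := by
    rw [ha, hC3]
    exact le_min (abs_nonneg _) (by positivity)
  rw [hlamμ]
  refine ⟨Complex.ofReal_im _, ?_, ?_⟩
  · rw [Complex.ofReal_re, ← sq_abs μ]
    exact pow_le_pow_left₀ ha0 hale 2
  · rw [Complex.ofReal_re, ← sq_abs μ]
    exact pow_le_pow_left₀ (abs_nonneg _) hbge 2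
end

section
/- Under the block setup and outer setup, let Â = [[A, Bᵀ],[B, −Q]] and H_0^{−1} = diag(A, S_0 + Q). Suppose (v, w) ∈ R^N × R^n is nonzero, Â·(v,w) = μ·H_0^{−1}·(v,w) for a real number μ ≠ 1, and w satisfies the orthogonality conditions e_sᵀ M_s w_s = 0 for all s ∈ {1,…,m}. Then μ = (1−√5)/2 or μ = (1+√5)/2. -/
open Matrix

/-- the nontrivial eigenvalues of the pencil `(Â, H₀⁻¹)`, with eigenvectors whose
second component is M-orthogonal to the kernels, are `(1∓√5)/2`. -/
theorem stmt1
    (m : ℕ) (hm : 1 ≤ m) (ns : Fin m → ℕ) (hns : ∀ s, 0 < ns s)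
    (M Bb : ∀ s : Fin m, Matrix (Fin (ns s)) (Fin (ns s)) ℝ)
    (hM : ∀ s, (M s).PosDef) (hBb : ∀ s, (Bb s).PosSemidef)
    (hker : ∀ s, LinearMap.ker (Bb s).mulVecLin = Submodule.span ℝ {onesV (ns s)})
    (n0 : ℕ) (hn0 : 1 ≤ n0)
    (A : Matrix ((Σ s, Fin (ns s)) ⊕ Fin n0) ((Σ s, Fin (ns s)) ⊕ Fin n0) ℝ)
    (hA : A.PosDef)
    (BD Q : Matrix (Σ s, Fin (ns s)) (Σ s, Fin (ns s)) ℝ)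
    (hBD : BD = blockDiagonal' Bb)
    (hQ : Q = blockDiagonal' fun s => Qblk (M s))
    (B : Matrix (Σ s, Fin (ns s)) ((Σ s, Fin (ns s)) ⊕ Fin n0) ℝ)
    (hB : B = fromCols BD 0)
    (S0 : Matrix (Σ s, Fin (ns s)) (Σ s, Fin (ns s)) ℝ)
    (hS0 : S0 = B * A⁻¹ * Bᵀ)
    (v : ((Σ s, Fin (ns s)) ⊕ Fin n0) → ℝ) (w : (Σ s, Fin (ns s)) → ℝ)
    (hvw : Sum.elim v w ≠ 0)
    (μ : ℝ) (hμ : μ ≠ 1)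
    (heig : (fromBlocks A Bᵀ B (-Q)).mulVec (Sum.elim v w)
            = μ • (fromBlocks A 0 0 (S0 + Q)).mulVec (Sum.elim v w))
    (horth : ∀ s : Fin m, onesV (ns s) ⬝ᵥ (M s).mulVec (fun i => w ⟨s, i⟩) = 0) :
    μ = (1 - Real.sqrt 5) / 2 ∨ μ = (1 + Real.sqrt 5) / 2 := by
  have hblk : ∀ (C : ∀ s : Fin m, Matrix (Fin (ns s)) (Fin (ns s)) ℝ) (s : Fin m)
      (i : Fin (ns s)),
      (blockDiagonal' C).mulVec w ⟨s, i⟩ = (C s).mulVec (fun j => w ⟨s, j⟩) i := by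
    intro C s i
    simp only [Matrix.mulVec, dotProduct, Fintype.sum_sigma]
    rw [Finset.sum_eq_single s]
    · simp [blockDiagonal'_apply_eq]
    · intro t _ hts
      apply Finset.sum_eq_zero
      intro j _
      rw [blockDiagonal'_apply_ne _ _ _ (Ne.symm hts), zero_mul]
    · simp
  have hQw : Q.mulVec w = 0 := by
    rw [hQ]
    funext x
    obtain ⟨s, i⟩ := x
    rw [hblk]
    have hsym : (M s)ᵀ = M s := by
      have := (hM s).isHermitian.eq
      rwa [conjTranspose_eq_transpose_of_trivial] at this
    have h1 : (M s).mulVec (onesV (ns s)) ⬝ᵥ (fun j => w ⟨s, j⟩) = 0 := by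
      rw [← horth s, dotProduct_mulVec, ← mulVec_transpose, hsym]
    unfold Qblk
    rw [smul_mulVec, vecMulVec_mulVec, h1]
    simp
  rw [fromBlocks_mulVec, fromBlocks_mulVec] at heig
  have e1 : A.mulVec v + Bᵀ.mulVec w = μ • A.mulVec v := by
    funext i
    have := congrFun heig (Sum.inl i)
    simpa using this
  have e2 : B.mulVec v = μ • S0.mulVec w := by
    funext i
    have := congrFun heig (Sum.inr i)
    simpa [neg_mulVec, add_mulVec, hQw] using this
  have hdet : IsUnit A.det := (Matrix.isUnit_iff_isUnit_det A).1 hA.isUnit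
  have e3 : Bᵀ.mulVec w = (μ - 1) • A.mulVec v := by
    rw [sub_smul, one_smul, ← e1]; abel
  have e4 : A⁻¹.mulVec (Bᵀ.mulVec w) = (μ - 1) • v := by
    rw [e3, mulVec_smul, mulVec_mulVec, nonsing_inv_mul _ hdet, one_mulVec]
  have e5 : S0.mulVec w = (μ - 1) • B.mulVec v := by
    rw [hS0, ← mulVec_mulVec, ← mulVec_mulVec, e4, mulVec_smul]
  have hμ1 : μ - 1 ≠ 0 := sub_ne_zero.2 hμ
  have hne : S0.mulVec w ≠ 0 := by
    intro h0
    have hBt : Bᵀ.mulVec w = 0 := by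
      by_contra hne
      have hp := hA.inv.dotProduct_mulVec_pos hne
      have : star (Bᵀ.mulVec w) ⬝ᵥ A⁻¹.mulVec (Bᵀ.mulVec w) = w ⬝ᵥ S0.mulVec w := by
        rw [hS0, ← mulVec_mulVec, ← mulVec_mulVec, dotProduct_mulVec w B, star_trivial,
          mulVec_transpose]
      rw [this, h0, dotProduct_zero] at hp
      exact lt_irrefl _ hp
    have hv : v = 0 := by
      rw [hBt, mulVec_zero] at e4
      exact (smul_eq_zero.1 e4.symm).resolve_left hμ1
    have hBDw : BD.mulVec w = 0 := by
      have hsym : BDᵀ = BD := by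
        rw [hBD, blockDiagonal'_transpose]
        congr 1
        funext s
        have := (hBb s).isHermitian.eq
        rwa [conjTranspose_eq_transpose_of_trivial] at this
      rw [← hsym]
      funext i
      have := congrFun hBt (Sum.inl i)
      rw [hB, transpose_fromCols, fromRows_mulVec] at this
      simpa using this
    have hw : w = 0 := by
      funext x
      obtain ⟨s, i⟩ := x
      have hk : (fun j => w ⟨s, j⟩) ∈ LinearMap.ker (Bb s).mulVecLin := by
        rw [LinearMap.mem_ker, mulVecLin_apply]
        funext j
        rw [← hblk, ← hBD, hBDw]
        rfl
      rw [hker, Submodule.mem_span_singleton] at hk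
      obtain ⟨c, hc⟩ := hk
      have ho := horth s
      rw [← hc, mulVec_smul, dotProduct_smul, smul_eq_mul] at ho
      have hone : onesV (ns s) ≠ 0 := fun h => one_ne_zero (congrFun h i)
      have hp := (hM s).dotProduct_mulVec_pos hone
      rw [star_trivial] at hp
      have hc0 : c = 0 := (mul_eq_zero.1 ho).resolve_right hp.ne'
      have := congrFun hc i
      rw [hc0] at this
      simpa using this.symm
    apply hvw
    rw [hv, hw]
    funext x
    cases x <;> rfl
  have hq : μ * μ - μ - 1 = 0 := by
    have : (μ * μ - μ - 1) • S0.mulVec w = 0 := by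
      have h6 := e5
      rw [e2, smul_smul] at h6
      rw [show μ * μ - μ - 1 = (μ - 1) * μ - 1 by ring, sub_smul, one_smul, ← h6, sub_self]
    exact (smul_eq_zero.1 this).resolve_right hne
  have h5 : Real.sqrt 5 * Real.sqrt 5 = 5 := Real.mul_self_sqrt (by norm_num)
  have : (μ - (1 - Real.sqrt 5) / 2) * (μ - (1 + Real.sqrt 5) / 2) = 0 := by
    linear_combination hq - h5 / 4
  rcases mul_eq_zero.1 this with h | h
  · left; linarith
  · right; linarith
end

section
/- Under the block setup and outer setup, let r ≥ 0, Ǎ = [[A, Bᵀ],[B, −r·S_0 − Q]] and H_0^{−1} = diag(A, S_0 + Q). Suppose (v, w) ∈ R^N × R^n is nonzero, Ǎ·(v,w) = μ·H_0^{−1}·(v,w) for a real number μ ≠ 1, and w satisfies the orthogonality conditions e_sᵀ M_s w_s = 0 for all s ∈ {1,…,m}. Then μ² + (r−1)μ − (1+r) = 0; that is, μ = ((1−r) − √((1−r)² + 4(1+r)))/2 or μ = ((1−r) + √((1−r)² + 4(1+r)))/2. -/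
open Matrix

/-- the nontrivial eigenvalues of the pencil `(Ǎ, H₀⁻¹)`, with eigenvectors whose
second component is M-orthogonal to the kernels, satisfy `μ² + (r−1)μ − (1+r) = 0`. -/
theorem stmt2
    (m : ℕ) (hm : 1 ≤ m) (ns : Fin m → ℕ) (hns : ∀ s, 0 < ns s)
    (M Bb : ∀ s : Fin m, Matrix (Fin (ns s)) (Fin (ns s)) ℝ)
    (hM : ∀ s, (M s).PosDef) (hBb : ∀ s, (Bb s).PosSemidef)
    (hker : ∀ s, LinearMap.ker (Bb s).mulVecLin = Submodule.span ℝ {onesV (ns s)})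
    (n0 : ℕ) (hn0 : 1 ≤ n0)
    (A : Matrix ((Σ s, Fin (ns s)) ⊕ Fin n0) ((Σ s, Fin (ns s)) ⊕ Fin n0) ℝ)
    (hA : A.PosDef)
    (BD Q : Matrix (Σ s, Fin (ns s)) (Σ s, Fin (ns s)) ℝ)
    (hBD : BD = blockDiagonal' Bb)
    (hQ : Q = blockDiagonal' fun s => Qblk (M s))
    (B : Matrix (Σ s, Fin (ns s)) ((Σ s, Fin (ns s)) ⊕ Fin n0) ℝ)
    (hB : B = fromCols BD 0)
    (S0 : Matrix (Σ s, Fin (ns s)) (Σ s, Fin (ns s)) ℝ)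
    (hS0 : S0 = B * A⁻¹ * Bᵀ)
    (r : ℝ) (hr : 0 ≤ r)
    (v : ((Σ s, Fin (ns s)) ⊕ Fin n0) → ℝ) (w : (Σ s, Fin (ns s)) → ℝ)
    (hvw : Sum.elim v w ≠ 0)
    (μ : ℝ) (hμ : μ ≠ 1)
    (heig : (fromBlocks A Bᵀ B (-(r • S0) - Q)).mulVec (Sum.elim v w)
            = μ • (fromBlocks A 0 0 (S0 + Q)).mulVec (Sum.elim v w))
    (horth : ∀ s : Fin m, onesV (ns s) ⬝ᵥ (M s).mulVec (fun i => w ⟨s, i⟩) = 0) :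
    μ ^ 2 + (r - 1) * μ - (1 + r) = 0 ∧
      (μ = ((1 - r) - Real.sqrt ((1 - r) ^ 2 + 4 * (1 + r))) / 2 ∨
       μ = ((1 - r) + Real.sqrt ((1 - r) ^ 2 + 4 * (1 + r))) / 2) := by
  have hbd : ∀ (C : ∀ s : Fin m, Matrix (Fin (ns s)) (Fin (ns s)) ℝ) (s : Fin m) (i : Fin (ns s)),
      (blockDiagonal' C).mulVec w ⟨s, i⟩ = (C s).mulVec (fun i => w ⟨s, i⟩) i := by
    intro C s i
    simp only [mulVec, dotProduct, Fintype.sum_sigma]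
    rw [Finset.sum_eq_single s]
    · simp [blockDiagonal'_apply_eq]
    · intro t _ hts
      apply Finset.sum_eq_zero
      intro j _
      rw [blockDiagonal'_apply_ne _ _ _ hts.symm, zero_mul]
    · simp
  have hMsym : ∀ s, (M s)ᵀ = M s := fun s => by
    have := (hM s).isHermitian
    simpa [IsHermitian, conjTranspose_eq_transpose_of_trivial] using this
  have hBsym : ∀ s, (Bb s)ᵀ = Bb s := fun s => by
    have := (hBb s).isHermitian
    simpa [IsHermitian, conjTranspose_eq_transpose_of_trivial] using this
  have hQw : Q.mulVec w = 0 := by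
    subst hQ
    ext ⟨s, i⟩
    rw [hbd]
    have h : (M s).mulVec (onesV (ns s)) ⬝ᵥ (fun i => w ⟨s, i⟩) = 0 := by
      rw [← horth s, dotProduct_mulVec, ← mulVec_transpose, hMsym]
    simp [Qblk, smul_mulVec, vecMulVec_mulVec, h]
  have hdet : IsUnit A.det := hA.det_pos.ne'.isUnit
  have hAi : ∀ x, A⁻¹.mulVec (A.mulVec x) = x := fun x => by
    rw [mulVec_mulVec, nonsing_inv_mul _ hdet, one_mulVec]
  rw [fromBlocks_mulVec, fromBlocks_mulVec] at heig
  have h1 : A.mulVec v + Bᵀ.mulVec w = μ • A.mulVec v := by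
    ext i
    simpa using congrFun heig (Sum.inl i)
  have h2 : B.mulVec v - r • S0.mulVec w = μ • S0.mulVec w := by
    ext i
    have := congrFun heig (Sum.inr i)
    simpa [sub_mulVec, add_mulVec, neg_mulVec, smul_mulVec, hQw, sub_eq_add_neg] using this
  have h3 : A⁻¹.mulVec (Bᵀ.mulVec w) = (μ - 1) • v := by
    have : Bᵀ.mulVec w = (μ - 1) • A.mulVec v := by
      rw [sub_smul, one_smul, ← h1]; abel
    rw [this, mulVec_smul, hAi]
  have h4 : S0.mulVec w = (μ - 1) • B.mulVec v := by
    rw [hS0, ← mulVec_mulVec, ← mulVec_mulVec, h3, mulVec_smul]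
  have hSne : S0.mulVec w ≠ 0 := by
    intro hS
    have hBw : Bᵀ.mulVec w = 0 := by
      by_contra hne
      have hp := hA.inv.dotProduct_mulVec_pos hne
      have : star (Bᵀ.mulVec w) ⬝ᵥ A⁻¹.mulVec (Bᵀ.mulVec w) = w ⬝ᵥ S0.mulVec w := by
        rw [hS0, ← mulVec_mulVec, ← mulVec_mulVec, star_trivial, dotProduct_mulVec w,
          mulVec_transpose]
      rw [this, hS, dotProduct_zero] at hp
      exact lt_irrefl _ hp
    have hw : w = 0 := by
      ext ⟨s, i⟩
      have hk : (Bb s).mulVec (fun i => w ⟨s, i⟩) = 0 := by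
        ext j
        have := congrFun hBw (Sum.inl ⟨s, j⟩)
        rw [hB, hBD, transpose_fromCols, fromRows_mulVec, Sum.elim_inl,
          blockDiagonal'_transpose, hbd, hBsym] at this
        exact this
      have hmem : (fun i => w ⟨s, i⟩) ∈ LinearMap.ker (Bb s).mulVecLin := by
        simpa using hk
      rw [hker, Submodule.mem_span_singleton] at hmem
      obtain ⟨c, hc⟩ := hmem
      have ho := horth s
      have hone : onesV (ns s) ≠ 0 := fun h => by
        have := congrFun h ⟨0, hns s⟩
        simp [onesV] at this
      have hp := (hM s).dotProduct_mulVec_pos hone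
      rw [star_trivial] at hp
      rw [← hc, mulVec_smul, dotProduct_smul, smul_eq_mul] at ho
      have hc0 : c = 0 := (mul_eq_zero.mp ho).resolve_right hp.ne'
      have := congrFun hc i
      simpa [hc0] using this.symm
    have hv : v = 0 := by
      rw [hBw, mulVec_zero] at h3
      exact (smul_eq_zero.mp h3.symm).resolve_left (sub_ne_zero.mpr hμ)
    apply hvw
    rw [hw, hv]
    ext (i | i) <;> rfl
  have hquad : μ ^ 2 + (r - 1) * μ - (1 + r) = 0 := by
    obtain ⟨i, hi⟩ := Function.ne_iff.mp hSne
    have e2 := congrFun h2 i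
    have e4 := congrFun h4 i
    simp only [Pi.sub_apply, Pi.smul_apply, smul_eq_mul, Pi.zero_apply] at e2 e4 hi
    apply (mul_eq_zero.mp (?_ : _ * (S0.mulVec w) i = 0)).resolve_right hi
    linear_combination (1 - μ) * e2 - e4
  refine ⟨hquad, ?_⟩
  have hs := Real.sq_sqrt (show 0 ≤ (1 - r) ^ 2 + 4 * (1 + r) by positivity)
  set t := Real.sqrt ((1 - r) ^ 2 + 4 * (1 + r))
  have : (μ - ((1 - r) - t) / 2) * (μ - ((1 - r) + t) / 2) = 0 := by
    linear_combination hquad - hs / 4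
  rcases mul_eq_zero.mp this with h | h
  · left; linarith
  · right; linarith
end

section
/- Under the block setup, let Q̃ = diag(Q̃_1,…,Q̃_m) with Q̃_s = (1/d_s²)·e_s (M_s e_s)ᵀ. Then (B_D + Q)^{−1} B_D = I − Q̃ and (B_D + Q)^{−1} Q = Q̃. Consequently B_D (B_D + Q)^{−1} B_D = B_D and Q (B_D + Q)^{−1} Q = Q. -/
open Matrix

/-- The rank-one block `Q̃_s = (1/d_s²) e_s (M_s e_s)ᵀ`. -/
noncomputable def Qtblk {k : ℕ} (M : Matrix (Fin k) (Fin k) ℝ) : Matrix (Fin k) (Fin k) ℝ :=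
  (onesV k ⬝ᵥ M.mulVec (onesV k))⁻¹ • vecMulVec (onesV k) (M.mulVec (onesV k))

theorem aux_d {k : ℕ} (hk : 0 < k) (M : Matrix (Fin k) (Fin k) ℝ) (hM : M.PosDef) :
    onesV k ⬝ᵥ M.mulVec (onesV k) ≠ 0 := by
  have hne : onesV k ≠ 0 := by
    intro h
    have := congrFun h ⟨0, hk⟩
    simp [onesV] at this
  have := hM.dotProduct_mulVec_pos hne
  simpa using this.ne'

theorem aux_Be {k : ℕ} (B : Matrix (Fin k) (Fin k) ℝ)
    (hker : LinearMap.ker B.mulVecLin = Submodule.span ℝ {onesV k}) :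
    B *ᵥ onesV k = 0 := by
  have : onesV k ∈ LinearMap.ker B.mulVecLin := by
    rw [hker]; exact Submodule.mem_span_singleton_self _
  simpa using this

theorem aux_BQt {k : ℕ} (M B : Matrix (Fin k) (Fin k) ℝ)
    (hker : LinearMap.ker B.mulVecLin = Submodule.span ℝ {onesV k}) :
    B * Qtblk M = 0 := by
  rw [Qtblk, Matrix.mul_smul, Matrix.mul_vecMulVec, aux_Be B hker]
  simp

theorem aux_QQt {k : ℕ} (hk : 0 < k) (M : Matrix (Fin k) (Fin k) ℝ) (hM : M.PosDef) :
    Qblk M * Qtblk M = Qblk M := by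
  have hd := aux_d hk M hM
  rw [Qtblk, Matrix.mul_smul, Matrix.mul_vecMulVec]
  have : Qblk M *ᵥ onesV k = M *ᵥ onesV k := by
    rw [dotProduct_comm] at hd
    rw [Qblk, smul_mulVec, vecMulVec_mulVec, dotProduct_comm]
    ext i
    simp
    field_simp
  rw [this, Qblk]

theorem aux_inv {k : ℕ} (hk : 0 < k) (M B : Matrix (Fin k) (Fin k) ℝ) (hM : M.PosDef)
    (hB : B.PosSemidef)
    (hker : LinearMap.ker B.mulVecLin = Submodule.span ℝ {onesV k}) :
    IsUnit (B + Qblk M) := by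
  have hd := aux_d hk M hM
  rw [← Matrix.mulVec_injective_iff_isUnit]
  rw [← Matrix.coe_mulVecLin, ← LinearMap.ker_eq_bot, LinearMap.ker_eq_bot']
  intro x hx
  rw [Matrix.mulVecLin_apply, Matrix.add_mulVec] at hx
  have hBt : Bᵀ = B := by simpa using hB.isHermitian.eq
  have hQx : Qblk M *ᵥ x = ((onesV k ⬝ᵥ M *ᵥ onesV k)⁻¹ * (M *ᵥ onesV k ⬝ᵥ x)) • (M *ᵥ onesV k) := by
    rw [Qblk, smul_mulVec, vecMulVec_mulVec]
    ext i
    simp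
    ring
  have h1 : onesV k ⬝ᵥ B *ᵥ x = 0 := by
    rw [Matrix.dotProduct_mulVec, ← Matrix.mulVec_transpose, hBt, aux_Be B hker, zero_dotProduct]
  have h2 : M *ᵥ onesV k ⬝ᵥ x = 0 := by
    have := congrArg (fun v => onesV k ⬝ᵥ v) hx
    simp only [dotProduct_add, h1, hQx, dotProduct_smul, dotProduct_zero, smul_eq_mul, zero_add] at this
    field_simp at this
    exact this
  rw [hQx, h2, mul_zero, zero_smul, add_zero] at hx
  have h3 : x ∈ LinearMap.ker B.mulVecLin := by simpa using hx
  rw [hker, Submodule.mem_span_singleton] at h3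
  obtain ⟨c, rfl⟩ := h3
  rw [dotProduct_smul, dotProduct_comm, smul_eq_mul] at h2
  rcases mul_eq_zero.mp h2 with h | h
  · simp [h]
  · exact absurd h hd

/-- `(B_D+Q)⁻¹ B_D = I − Q̃`, `(B_D+Q)⁻¹ Q = Q̃`, and consequently
`B_D (B_D+Q)⁻¹ B_D = B_D` and `Q (B_D+Q)⁻¹ Q = Q`. -/
theorem stmt5
    (m : ℕ) (hm : 1 ≤ m) (ns : Fin m → ℕ) (hns : ∀ s, 0 < ns s)
    (M Bb : ∀ s : Fin m, Matrix (Fin (ns s)) (Fin (ns s)) ℝ)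
    (hM : ∀ s, (M s).PosDef) (hBb : ∀ s, (Bb s).PosSemidef)
    (hker : ∀ s, LinearMap.ker (Bb s).mulVecLin = Submodule.span ℝ {onesV (ns s)})
    (BD Q Qt : Matrix (Σ s, Fin (ns s)) (Σ s, Fin (ns s)) ℝ)
    (hBD : BD = blockDiagonal' Bb)
    (hQ : Q = blockDiagonal' fun s => Qblk (M s))
    (hQt : Qt = blockDiagonal' fun s => Qtblk (M s)) :
    (BD + Q)⁻¹ * BD = 1 - Qt ∧
    (BD + Q)⁻¹ * Q = Qt ∧
    BD * (BD + Q)⁻¹ * BD = BD ∧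
    Q * (BD + Q)⁻¹ * Q = Q := by
  have hu : IsUnit (BD + Q) := by
    have h : ∀ s, IsUnit (Bb s + Qblk (M s)) := fun s =>
      aux_inv (hns s) (M s) (Bb s) (hM s) (hBb s) (hker s)
    have hmul : blockDiagonal' (fun s => (Bb s + Qblk (M s))⁻¹) * (BD + Q) = 1 := by
      rw [hBD, hQ, ← blockDiagonal'_add, ← blockDiagonal'_mul, ← blockDiagonal'_one]
      congr 1
      funext s
      exact Matrix.nonsing_inv_mul _ ((Matrix.isUnit_iff_isUnit_det _).mp (h s))
    exact IsUnit.of_mul_eq_one_right _ hmul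
  have hdet := (Matrix.isUnit_iff_isUnit_det _).mp hu
  have h1 : BD * Qt = 0 := by
    rw [hBD, hQt, ← blockDiagonal'_mul, ← blockDiagonal'_zero]
    congr 1
    funext s
    exact aux_BQt _ _ (hker s)
  have h2 : Q * Qt = Q := by
    rw [hQ, hQt, ← blockDiagonal'_mul]
    congr 1
    funext s
    exact aux_QQt (hns s) _ (hM s)
  have e2 : (BD + Q)⁻¹ * Q = Qt := by
    have : (BD + Q) * Qt = Q := by rw [Matrix.add_mul, h1, h2, zero_add]
    calc (BD + Q)⁻¹ * Q = (BD + Q)⁻¹ * ((BD + Q) * Qt) := by rw [this]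
      _ = Qt := Matrix.nonsing_inv_mul_cancel_left _ _ hdet
  have e1 : (BD + Q)⁻¹ * BD = 1 - Qt := by
    rw [eq_sub_iff_add_eq]
    rw [← e2]
    rw [← Matrix.mul_add, Matrix.nonsing_inv_mul _ hdet]
  refine ⟨e1, e2, ?_, ?_⟩
  · rw [Matrix.mul_assoc, e1, Matrix.mul_sub, h1, Matrix.mul_one, sub_zero]
  · rw [Matrix.mul_assoc, e2, h2]
end

section
/- Under the block setup and outer setup, let ε_1,…,ε_m > 0, Σ_ε = diag(ε_1 I_{n_1},…,ε_m I_{n_m}), and S_ε = Σ_ε B_D + Q + S_0. If ψ ∈ R^n is nonzero and S_ε ψ = μ (B_D + Q) ψ for some real number μ ≠ 1, then Q ψ = 0; equivalently, e_sᵀ M_s ψ_s = 0 for all s, i.e., ψ is M-orthogonal to the kernel of B_D. -/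
open Matrix

theorem bd_mulVec {m : ℕ} {ns : Fin m → ℕ}
    (X : ∀ s : Fin m, Matrix (Fin (ns s)) (Fin (ns s)) ℝ) (w : (Σ s, Fin (ns s)) → ℝ)
    (t : Fin m) (i : Fin (ns t)) :
    (blockDiagonal' X).mulVec w ⟨t, i⟩ = (X t).mulVec (fun j => w ⟨t, j⟩) i := by
  simp only [mulVec, dotProduct, Fintype.sum_sigma]
  rw [Finset.sum_eq_single t]
  · simp [blockDiagonal'_apply_eq]
  · intro b _ hb
    apply Finset.sum_eq_zero
    intro j _
    rw [blockDiagonal'_apply_ne _ _ _ (Ne.symm hb), zero_mul]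
  · simp

theorem dot_ind {m : ℕ} {ns : Fin m → ℕ} (s : Fin m) (w : (Σ s, Fin (ns s)) → ℝ) :
    (fun p : (Σ s, Fin (ns s)) => if p.1 = s then (1 : ℝ) else 0) ⬝ᵥ w
      = onesV (ns s) ⬝ᵥ fun i => w ⟨s, i⟩ := by
  simp only [dotProduct, Fintype.sum_sigma, onesV]
  rw [Finset.sum_eq_single s]
  · simp
  · intro b _ hb
    simp [hb]
  · simp

theorem Qblk_mulVec {k : ℕ} (M : Matrix (Fin k) (Fin k) ℝ) (hM : M.PosDef) (x : Fin k → ℝ) :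
    (Qblk M).mulVec x = ((onesV k ⬝ᵥ M.mulVec (onesV k))⁻¹ * (onesV k ⬝ᵥ M.mulVec x)) •
      M.mulVec (onesV k) := by
  have hs : Mᵀ = M := by simpa using hM.isHermitian.eq
  have h : M.mulVec (onesV k) ⬝ᵥ x = onesV k ⬝ᵥ M.mulVec x := by
    rw [dotProduct_mulVec, ← mulVec_transpose, hs]
  rw [Qblk, smul_mulVec, vecMulVec_mulVec, h]
  ext i
  simp
  ring

/-- any eigenvector of the pencil `(S_ε, B_D+Q)` for an eigenvalue `μ ≠ 1`
satisfies `Q ψ = 0`, equivalently it is M-orthogonal to `ker B_D`. -/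
theorem stmt8
    (m : ℕ) (hm : 1 ≤ m) (ns : Fin m → ℕ) (hns : ∀ s, 0 < ns s)
    (M Bb : ∀ s : Fin m, Matrix (Fin (ns s)) (Fin (ns s)) ℝ)
    (hM : ∀ s, (M s).PosDef) (hBb : ∀ s, (Bb s).PosSemidef)
    (hker : ∀ s, LinearMap.ker (Bb s).mulVecLin = Submodule.span ℝ {onesV (ns s)})
    (n0 : ℕ) (hn0 : 1 ≤ n0)
    (A : Matrix ((Σ s, Fin (ns s)) ⊕ Fin n0) ((Σ s, Fin (ns s)) ⊕ Fin n0) ℝ)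
    (hA : A.PosDef)
    (BD Q : Matrix (Σ s, Fin (ns s)) (Σ s, Fin (ns s)) ℝ)
    (hBD : BD = blockDiagonal' Bb)
    (hQ : Q = blockDiagonal' fun s => Qblk (M s))
    (B : Matrix (Σ s, Fin (ns s)) ((Σ s, Fin (ns s)) ⊕ Fin n0) ℝ)
    (hB : B = fromCols BD 0)
    (S0 : Matrix (Σ s, Fin (ns s)) (Σ s, Fin (ns s)) ℝ)
    (hS0 : S0 = B * A⁻¹ * Bᵀ)
    (ε : Fin m → ℝ) (hε : ∀ s, 0 < ε s)
    (Sig Sε : Matrix (Σ s, Fin (ns s)) (Σ s, Fin (ns s)) ℝ)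
    (hSig : Sig = blockDiagonal' fun s => ε s • (1 : Matrix (Fin (ns s)) (Fin (ns s)) ℝ))
    (hSε : Sε = Sig * BD + Q + S0)
    (ψ : (Σ s, Fin (ns s)) → ℝ) (hψ : ψ ≠ 0)
    (μ : ℝ) (hμ : μ ≠ 1)
    (heig : Sε.mulVec ψ = μ • (BD + Q).mulVec ψ) :
    Q.mulVec ψ = 0 ∧
    ∀ s : Fin m, onesV (ns s) ⬝ᵥ (M s).mulVec (fun i => ψ ⟨s, i⟩) = 0 := by
  have hkey : ∀ s : Fin m, onesV (ns s) ⬝ᵥ (M s).mulVec (fun i => ψ ⟨s, i⟩) = 0 := by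
    intro s
    have hB1 : ∀ t, (Bb t).mulVec (onesV (ns t)) = 0 := by
      intro t
      have : onesV (ns t) ∈ LinearMap.ker (Bb t).mulVecLin := by
        rw [hker t]; exact Submodule.mem_span_singleton_self _
      simpa using this
    have hBs : ∀ t, (Bb t)ᵀ = Bb t := fun t => by simpa using (hBb t).isHermitian.eq
    have hBdot : ∀ t (x : Fin (ns t) → ℝ), onesV (ns t) ⬝ᵥ (Bb t).mulVec x = 0 := by
      intro t x
      rw [dotProduct_mulVec, ← mulVec_transpose, hBs, hB1, zero_dotProduct]
    have hBDdot : ∀ x, (fun p : (Σ s, Fin (ns s)) => if p.1 = s then (1 : ℝ) else 0) ⬝ᵥ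
        BD.mulVec x = 0 := by
      intro x
      rw [dot_ind, hBD]
      simp only [bd_mulVec]
      exact hBdot s _
    have hS : (fun p : (Σ s, Fin (ns s)) => if p.1 = s then (1 : ℝ) else 0) ⬝ᵥ
        (Sig * BD).mulVec ψ = 0 := by
      rw [dot_ind, ← mulVec_mulVec, hSig, hBD]
      simp only [bd_mulVec, smul_mulVec, one_mulVec]
      have := hBdot s (fun j => ψ ⟨s, j⟩)
      change onesV (ns s) ⬝ᵥ (ε s • (Bb s).mulVec (fun j => ψ ⟨s, j⟩)) = 0
      rw [dotProduct_smul, this, smul_zero]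
    have hS0d : (fun p : (Σ s, Fin (ns s)) => if p.1 = s then (1 : ℝ) else 0) ⬝ᵥ
        S0.mulVec ψ = 0 := by
      have hBx : B = BD * (fromCols 1 0 :
          Matrix (Σ s, Fin (ns s)) ((Σ s, Fin (ns s)) ⊕ Fin n0) ℝ) := by
        rw [hB, mul_fromCols, Matrix.mul_one, Matrix.mul_zero]
      rw [hS0, Matrix.mul_assoc, hBx, Matrix.mul_assoc, ← mulVec_mulVec]
      exact hBDdot _
    have h := congrArg (fun y =>
      (fun p : (Σ s, Fin (ns s)) => if p.1 = s then (1 : ℝ) else 0) ⬝ᵥ y) heig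
    simp only [hSε, add_mulVec, dotProduct_add, dotProduct_smul, hS, hS0d, hBDdot,
      zero_add, add_zero, smul_eq_mul] at h
    have hq : (fun p : (Σ s, Fin (ns s)) => if p.1 = s then (1 : ℝ) else 0) ⬝ᵥ
        Q.mulVec ψ = onesV (ns s) ⬝ᵥ (M s).mulVec (fun i => ψ ⟨s, i⟩) := by
      have hne : onesV (ns s) ≠ 0 := fun h0 => by
        have := congrFun h0 ⟨0, hns s⟩
        simp [onesV] at this
      have hd : 0 < onesV (ns s) ⬝ᵥ (M s).mulVec (onesV (ns s)) := by
        simpa using (hM s).dotProduct_mulVec_pos hne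
      rw [dot_ind, hQ]
      simp only [bd_mulVec]
      change onesV (ns s) ⬝ᵥ ((Qblk (M s)).mulVec (fun j => ψ ⟨s, j⟩)) = _
      rw [Qblk_mulVec _ (hM s), dotProduct_smul, smul_eq_mul]
      field_simp
    rw [hq] at h
    have h2 : (μ - 1) * (onesV (ns s) ⬝ᵥ (M s).mulVec (fun i => ψ ⟨s, i⟩)) = 0 := by
      linarith
    exact (mul_eq_zero.mp h2).resolve_left (sub_ne_zero.mpr hμ)
  refine ⟨?_, hkey⟩
  ext ⟨s, i⟩
  rw [hQ, bd_mulVec, Qblk_mulVec _ (hM s), hkey s]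
  simp
end

section
/- Under the block setup and outer setup, assume S_0 ≼ B_D ≼ (1+C²)·S_0 in the Loewner order for some C > 0, and let ε_1,…,ε_m satisfy 0 < ε_min ≤ ε_s ≤ ε_max for all s. With Σ_ε = diag(ε_1 I_{n_1},…,ε_m I_{n_m}) and S_ε = Σ_ε B_D + Q + S_0, every eigenvalue μ of the pencil (S_ε, B_D + Q) (i.e., every μ with S_ε ψ = μ (B_D+Q) ψ for some ψ ≠ 0) satisfies min{ε_min + 1/(1+C²), 1} ≤ μ ≤ 1 + ε_max. -/
open Matrix

/-- Quadratic form of a block diagonal matrix. -/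
lemma quad_block {m : ℕ} {ns : Fin m → ℕ}
    (X : ∀ s : Fin m, Matrix (Fin (ns s)) (Fin (ns s)) ℝ) (ψ : (Σ s, Fin (ns s)) → ℝ) :
    ψ ⬝ᵥ (blockDiagonal' X).mulVec ψ
      = ∑ s, (fun i => ψ ⟨s, i⟩) ⬝ᵥ (X s).mulVec (fun i => ψ ⟨s, i⟩) := by
  simp only [dotProduct, mulVec, Fintype.sum_sigma]
  refine Finset.sum_congr rfl fun s _ => Finset.sum_congr rfl fun i _ => ?_
  congr 1
  rw [Finset.sum_eq_single s]
  · simp [blockDiagonal'_apply]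
  · intro t _ ht
    refine Finset.sum_eq_zero fun j _ => ?_
    rw [blockDiagonal'_apply_ne _ _ _ (Ne.symm ht), zero_mul]
  · simp

lemma quad_Q {k : ℕ} (M : Matrix (Fin k) (Fin k) ℝ) (v : Fin k → ℝ) :
    v ⬝ᵥ (Qblk M).mulVec v
      = (onesV k ⬝ᵥ M.mulVec (onesV k))⁻¹ * (v ⬝ᵥ M.mulVec (onesV k)) ^ 2 := by
  unfold Qblk
  rw [smul_mulVec, dotProduct_smul, vecMulVec_mulVec, op_smul_eq_smul, dotProduct_smul,
    dotProduct_comm _ v]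
  simp only [smul_eq_mul]
  ring

/-- eigenvalue bounds for the pencil `(S_ε, B_D+Q)`:
`min{ε_min + 1/(1+C²), 1} ≤ μ ≤ 1 + ε_max`. -/
theorem stmt9
    (m : ℕ) (hm : 1 ≤ m) (ns : Fin m → ℕ) (hns : ∀ s, 0 < ns s)
    (M Bb : ∀ s : Fin m, Matrix (Fin (ns s)) (Fin (ns s)) ℝ)
    (hM : ∀ s, (M s).PosDef) (hBb : ∀ s, (Bb s).PosSemidef)
    (hker : ∀ s, LinearMap.ker (Bb s).mulVecLin = Submodule.span ℝ {onesV (ns s)})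
    (n0 : ℕ) (hn0 : 1 ≤ n0)
    (A : Matrix ((Σ s, Fin (ns s)) ⊕ Fin n0) ((Σ s, Fin (ns s)) ⊕ Fin n0) ℝ)
    (hA : A.PosDef)
    (BD Q : Matrix (Σ s, Fin (ns s)) (Σ s, Fin (ns s)) ℝ)
    (hBD : BD = blockDiagonal' Bb)
    (hQ : Q = blockDiagonal' fun s => Qblk (M s))
    (B : Matrix (Σ s, Fin (ns s)) ((Σ s, Fin (ns s)) ⊕ Fin n0) ℝ)
    (hB : B = fromCols BD 0)
    (S0 : Matrix (Σ s, Fin (ns s)) (Σ s, Fin (ns s)) ℝ)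
    (hS0 : S0 = B * A⁻¹ * Bᵀ)
    (C : ℝ) (hC : 0 < C)
    (hLoe1 : (BD - S0).PosSemidef)
    (hLoe2 : ((1 + C ^ 2) • S0 - BD).PosSemidef)
    (ε : Fin m → ℝ) (εmin εmax : ℝ) (hεmin : 0 < εmin)
    (hε : ∀ s, εmin ≤ ε s ∧ ε s ≤ εmax)
    (Sig Sε : Matrix (Σ s, Fin (ns s)) (Σ s, Fin (ns s)) ℝ)
    (hSig : Sig = blockDiagonal' fun s => ε s • (1 : Matrix (Fin (ns s)) (Fin (ns s)) ℝ))
    (hSε : Sε = Sig * BD + Q + S0)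
    (μ : ℝ) (ψ : (Σ s, Fin (ns s)) → ℝ) (hψ : ψ ≠ 0)
    (heig : Sε.mulVec ψ = μ • (BD + Q).mulVec ψ) :
    min (εmin + 1 / (1 + C ^ 2)) 1 ≤ μ ∧ μ ≤ 1 + εmax := by
  have hd : ∀ s, 0 < onesV (ns s) ⬝ᵥ (M s).mulVec (onesV (ns s)) := by
    intro s
    have h1 : onesV (ns s) ≠ 0 := by
      intro h
      have := congrFun h ⟨0, hns s⟩
      simp [onesV] at this
    simpa using (hM s).dotProduct_mulVec_pos h1
  set v : ∀ s, Fin (ns s) → ℝ := fun s i => ψ ⟨s, i⟩ with hv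
  have hbs : ∀ s, 0 ≤ v s ⬝ᵥ (Bb s).mulVec (v s) := fun s => by
    simpa using (hBb s).dotProduct_mulVec_nonneg (v s)
  have hqs : ∀ s, 0 ≤ v s ⬝ᵥ (Qblk (M s)).mulVec (v s) := fun s => by
    rw [quad_Q]
    have := hd s
    positivity
  have hb : ψ ⬝ᵥ BD.mulVec ψ = ∑ s, v s ⬝ᵥ (Bb s).mulVec (v s) := by
    rw [hBD, quad_block]
  have hq : ψ ⬝ᵥ Q.mulVec ψ = ∑ s, v s ⬝ᵥ (Qblk (M s)).mulVec (v s) := by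
    rw [hQ, quad_block]
  have he : ψ ⬝ᵥ (Sig * BD).mulVec ψ = ∑ s, ε s * (v s ⬝ᵥ (Bb s).mulVec (v s)) := by
    rw [hSig, hBD, ← blockDiagonal'_mul, quad_block]
    refine Finset.sum_congr rfl fun s _ => ?_
    rw [smul_mul_assoc, one_mul, smul_mulVec, dotProduct_smul, smul_eq_mul]
  have hb0 : 0 ≤ ψ ⬝ᵥ BD.mulVec ψ := by
    rw [hb]; exact Finset.sum_nonneg fun s _ => hbs s
  have hq0 : 0 ≤ ψ ⬝ᵥ Q.mulVec ψ := by
    rw [hq]; exact Finset.sum_nonneg fun s _ => hqs s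
  have hel : εmin * (ψ ⬝ᵥ BD.mulVec ψ) ≤ ψ ⬝ᵥ (Sig * BD).mulVec ψ := by
    rw [he, hb, Finset.mul_sum]
    exact Finset.sum_le_sum fun s _ => mul_le_mul_of_nonneg_right (hε s).1 (hbs s)
  have heu : ψ ⬝ᵥ (Sig * BD).mulVec ψ ≤ εmax * (ψ ⬝ᵥ BD.mulVec ψ) := by
    rw [he, hb, Finset.mul_sum]
    exact Finset.sum_le_sum fun s _ => mul_le_mul_of_nonneg_right (hε s).2 (hbs s)
  have hpos : 0 < ψ ⬝ᵥ BD.mulVec ψ + ψ ⬝ᵥ Q.mulVec ψ := by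
    by_contra hcon
    have hb1 : ψ ⬝ᵥ BD.mulVec ψ = 0 := by linarith
    have hq1 : ψ ⬝ᵥ Q.mulVec ψ = 0 := by linarith
    rw [hb, Finset.sum_eq_zero_iff_of_nonneg fun s _ => hbs s] at hb1
    rw [hq, Finset.sum_eq_zero_iff_of_nonneg fun s _ => hqs s] at hq1
    apply hψ
    funext ⟨s, i⟩
    have h1 := hb1 s (Finset.mem_univ s)
    have h2 := hq1 s (Finset.mem_univ s)
    have h3 : (Bb s).mulVec (v s) = 0 := by
      apply ((hBb s).dotProduct_mulVec_zero_iff (v s)).1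
      simpa using h1
    have h4 : v s ∈ LinearMap.ker (Bb s).mulVecLin := by
      simpa [LinearMap.mem_ker] using h3
    rw [hker s, Submodule.mem_span_singleton] at h4
    obtain ⟨c, hc⟩ := h4
    rw [quad_Q, ← hc, smul_dotProduct, smul_eq_mul] at h2
    have hds := hd s
    have hc0 : c = 0 := by
      have := hds.ne'
      simpa [this] using h2
    have : v s i = 0 := by rw [← hc, hc0]; simp
    simpa [hv] using this
  have hl1 : ψ ⬝ᵥ S0.mulVec ψ ≤ ψ ⬝ᵥ BD.mulVec ψ := by
    have := hLoe1.dotProduct_mulVec_nonneg ψ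
    simp only [star_trivial, sub_mulVec, dotProduct_sub] at this
    linarith
  have hl2 : ψ ⬝ᵥ BD.mulVec ψ ≤ (1 + C ^ 2) * (ψ ⬝ᵥ S0.mulVec ψ) := by
    have := hLoe2.dotProduct_mulVec_nonneg ψ
    simp only [star_trivial, sub_mulVec, dotProduct_sub, smul_mulVec, dotProduct_smul,
      smul_eq_mul] at this
    linarith
  have hE := congrArg (fun w => ψ ⬝ᵥ w) heig
  simp only [hSε, add_mulVec, dotProduct_add, dotProduct_smul, smul_eq_mul] at hE
  have hεmax : 0 < εmax := by
    have := hε ⟨0, hm⟩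
    linarith [this.1, this.2]
  generalize ψ ⬝ᵥ BD.mulVec ψ = b at *
  generalize ψ ⬝ᵥ Q.mulVec ψ = q at *
  generalize ψ ⬝ᵥ S0.mulVec ψ = s0 at *
  generalize ψ ⬝ᵥ (Sig * BD).mulVec ψ = e at *
  constructor
  · have h5 : 1 / (1 + C ^ 2) * b ≤ s0 := by
      rw [one_div, inv_mul_le_iff₀ (by positivity)]
      exact hl2
    have h6 := mul_le_mul_of_nonneg_right (min_le_left (εmin + 1 / (1 + C ^ 2)) 1) hb0
    have h7 := mul_le_mul_of_nonneg_right (min_le_right (εmin + 1 / (1 + C ^ 2)) 1) hq0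
    refine le_of_mul_le_mul_right ?_ hpos
    rw [← hE]
    linarith
  · refine le_of_mul_le_mul_right ?_ hpos
    rw [← hE]
    have := mul_nonneg hεmax.le hq0
    linarith
end

section
/- Let A be a real symmetric positive definite N×N matrix, B a real n×N matrix, and C a real symmetric n×n matrix such that C + B A^{−1} Bᵀ is positive definite. Then the symmetric saddle point matrix 𝒜 = [[A, Bᵀ],[B, −C]] ∈ R^{(N+n)×(N+n)} is nonsingular and has exactly N positive eigenvalues and n negative eigenvalues (counted with multiplicity). -/
open Matrix

theorem aux_count {ι κ : Type*} [Fintype ι] [DecidableEq ι] [Fintype κ]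
    (M U : Matrix ι ι ℝ) (d : ι → ℝ) (hM : M = U * diagonal d * Uᵀ)
    (f : (κ → ℝ) →ₗ[ℝ] (ι → ℝ)) (hf : ∀ x, x ≠ 0 → 0 < f x ⬝ᵥ (M *ᵥ f x)) :
    Fintype.card κ ≤ Fintype.card {i // 0 < d i} := by
  let g : (κ → ℝ) →ₗ[ℝ] ({i // 0 < d i} → ℝ) :=
    (LinearMap.funLeft ℝ ℝ (Subtype.val : {i // 0 < d i} → ι)) ∘ₗ Uᵀ.mulVecLin ∘ₗ f
  have hg : Function.Injective g := by
    rw [injective_iff_map_eq_zero]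
    intro x hx
    by_contra h0
    have h1 := hf x h0
    have h2 : f x ⬝ᵥ (M *ᵥ f x) = ∑ i, d i * (Uᵀ *ᵥ f x) i ^ 2 := by
      rw [hM, ← mulVec_mulVec, ← mulVec_mulVec, dotProduct_mulVec, ← mulVec_transpose]
      simp only [dotProduct, mulVec_diagonal]
      exact Finset.sum_congr rfl fun i _ => by ring
    rw [h2] at h1
    refine absurd h1 (not_lt.mpr (Finset.sum_nonpos fun i _ => ?_))
    by_cases hi : 0 < d i
    · have h3 : (Uᵀ *ᵥ f x) i = 0 := congrFun hx ⟨i, hi⟩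
      simp [h3]
    · exact mul_nonpos_of_nonpos_of_nonneg (not_lt.mp hi) (sq_nonneg _)
  simpa using LinearMap.finrank_le_finrank_of_injective hg

/-- a symmetric saddle point matrix `[[A, Bᵀ],[B, −C]]` with `A` SPD and
`C + B A⁻¹ Bᵀ` SPD is nonsingular and has exactly `N` positive and `n` negative eigenvalues
(counted with multiplicity, as roots of the characteristic polynomial). -/
theorem stmt10
    (N n : ℕ)
    (A : Matrix (Fin N) (Fin N) ℝ) (hA : A.PosDef)
    (B : Matrix (Fin n) (Fin N) ℝ)
    (Cm : Matrix (Fin n) (Fin n) ℝ) (hCm : Cm.IsSymm)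
    (hSchur : (Cm + B * A⁻¹ * Bᵀ).PosDef) :
    IsUnit (fromBlocks A Bᵀ B (-Cm)).det ∧
    Multiset.card ((fromBlocks A Bᵀ B (-Cm)).charpoly.roots.filter fun x => 0 < x) = N ∧
    Multiset.card ((fromBlocks A Bᵀ B (-Cm)).charpoly.roots.filter fun x => x < 0) = n := by
  have hdA : IsUnit A.det := hA.det_pos.ne'.isUnit
  have hH : (fromBlocks A Bᵀ B (-Cm)).IsHermitian := by
    apply IsHermitian.fromBlocks hA.1
    · simp [conjTranspose_eq_transpose_of_trivial]
    · simpa [IsHermitian, conjTranspose_eq_transpose_of_trivial] using hCm.eq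
  have hdet : IsUnit (fromBlocks A Bᵀ B (-Cm)).det := by
    letI := invertibleOfIsUnitDet A hdA
    rw [det_fromBlocks₁₁, invOf_eq_nonsing_inv]
    have : -Cm - B * A⁻¹ * Bᵀ = -(Cm + B * A⁻¹ * Bᵀ) := by abel
    rw [this, det_neg]
    exact hdA.mul (((isUnit_one.neg).pow _).mul hSchur.det_pos.ne'.isUnit)
  refine ⟨hdet, ?_⟩
  have hspec := hH.spectral_theorem
  have hroots := hH.roots_charpoly_eq_eigenvalues
  generalize hM : fromBlocks A Bᵀ B (-Cm) = M at *
  set d := hH.eigenvalues with hd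
  have hM1 : M = (hH.eigenvectorUnitary : Matrix _ _ ℝ) * diagonal d
      * (hH.eigenvectorUnitary : Matrix _ _ ℝ)ᵀ := by
    conv_lhs => rw [hspec]
    simp [Unitary.conjStarAlgAut_apply, star_eq_conjTranspose,
      conjTranspose_eq_transpose_of_trivial, hd, Function.comp_def]
  have hM2 : -M = (hH.eigenvectorUnitary : Matrix _ _ ℝ) * diagonal (fun i => - d i)
      * (hH.eigenvectorUnitary : Matrix _ _ ℝ)ᵀ := by
    have : diagonal (fun i => - d i) = - diagonal d := by simp [diagonal_neg]
    rw [this, Matrix.mul_neg, Matrix.neg_mul, ← hM1]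
  let f1 : (Fin N → ℝ) →ₗ[ℝ] (Fin N ⊕ Fin n → ℝ) := (fromRows (1 : Matrix (Fin N) (Fin N) ℝ) 0).mulVecLin
  let f2 : (Fin n → ℝ) →ₗ[ℝ] (Fin N ⊕ Fin n → ℝ) := (fromRows (-(A⁻¹ * Bᵀ)) 1).mulVecLin
  have c1 := aux_count M _ d hM1 f1 (by
    intro x hx
    have := hA.dotProduct_mulVec_pos hx
    simpa [f1, ← hM, fromRows_mulVec, fromBlocks_mulVec, Sum.elim_comp_inl, Sum.elim_comp_inr, dotProduct] using this)
  have c2 := aux_count (-M) _ _ hM2 f2 (by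
    intro x hx
    have := hSchur.dotProduct_mulVec_pos hx
    have e : -M *ᵥ f2 x = Sum.elim (fun _ => (0:ℝ)) ((Cm + B * A⁻¹ * Bᵀ) *ᵥ x) := by
      simp only [f2, ← hM, neg_mulVec, mulVecLin_apply, fromRows_mulVec, fromBlocks_mulVec,
        Sum.elim_comp_inl, Sum.elim_comp_inr, mulVec_neg, mulVec_mulVec, one_mulVec]
      rw [← Matrix.mul_assoc, Matrix.mul_nonsing_inv _ hdA, ← Matrix.mul_assoc]
      ext (i | i) <;> simp [add_mulVec]
    rw [e]
    simpa [f2, fromRows_mulVec, dotProduct] using this)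
  have k1 : Multiset.card (M.charpoly.roots.filter fun x => 0 < x)
      = (Finset.univ.filter fun i => 0 < d i).card := by
    rw [hroots, Multiset.filter_map, Multiset.card_map]; rfl
  have k2 : Multiset.card (M.charpoly.roots.filter fun x => x < 0)
      = (Finset.univ.filter fun i => d i < 0).card := by
    rw [hroots, Multiset.filter_map, Multiset.card_map]; rfl
  have k3 : (Finset.univ.filter fun i => 0 < d i).card
      + (Finset.univ.filter fun i => d i < 0).card ≤ N + n := by
    rw [← Finset.card_union_of_disjoint]
    · exact (Finset.card_le_univ _).trans (by simp)
    · rw [Finset.disjoint_filter]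
      intro i _ h
      exact h.not_gt
  rw [Fintype.card_subtype, Fintype.card_fin] at c1 c2
  simp only [neg_pos] at c2
  rw [k1, k2]
  omega
end

section
/- Under the block setup and outer setup, let ε_1,…,ε_m > 0 and Σ_ε = diag(ε_1 I_{n_1},…,ε_m I_{n_m}). Then the matrix Σ_ε B_D + Q is symmetric positive definite, and the saddle point matrix A_ε = [[A, Bᵀ],[B, −Σ_ε B_D − Q]] ∈ R^{(N+n)×(N+n)} is nonsingular; in particular, for every F ∈ R^{N+n} the linear system A_ε z = F has a unique solution. -/
open Matrix

theorem block_posDef {k : ℕ} (hk : 0 < k) (M B : Matrix (Fin k) (Fin k) ℝ) (hM : M.PosDef)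
    (hB : B.PosSemidef) (hker : LinearMap.ker B.mulVecLin = Submodule.span ℝ {onesV k})
    (c : ℝ) (hc : 0 < c) : (c • B + Qblk M).PosDef := by
  have he : onesV k ≠ 0 := by
    intro h
    have := congrFun h ⟨0, hk⟩
    simp [onesV] at this
  have hd : 0 < onesV k ⬝ᵥ M.mulVec (onesV k) := by
    simpa using hM.dotProduct_mulVec_pos he
  have hQ : (Qblk M).PosSemidef := by
    unfold Qblk
    refine PosSemidef.smul ?_ (inv_nonneg.2 hd.le)
    simpa using posSemidef_vecMulVec_self_star (M.mulVec (onesV k))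
  have hcB : (c • B).PosSemidef := hB.smul hc.le
  refine PosDef.of_dotProduct_mulVec_pos (hcB.add hQ).1 fun x hx => ?_
  have h1 : 0 ≤ star x ⬝ᵥ (c • B).mulVec x := hcB.dotProduct_mulVec_nonneg x
  have h2 : 0 ≤ star x ⬝ᵥ (Qblk M).mulVec x := hQ.dotProduct_mulVec_nonneg x
  rw [add_mulVec, dotProduct_add]
  rcases h1.lt_or_eq with h | h
  · linarith
  · have h0 := (hcB.dotProduct_mulVec_zero_iff x).1 h.symm
    rw [smul_mulVec, smul_eq_zero] at h0
    have h0 : B.mulVec x = 0 := h0.resolve_left hc.ne'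
    have hmem : x ∈ LinearMap.ker B.mulVecLin := by simpa using h0
    rw [hker, Submodule.mem_span_singleton] at hmem
    obtain ⟨a, rfl⟩ := hmem
    have ha : a ≠ 0 := by
      rintro rfl
      simp at hx
    have h3 : star (a • onesV k) ⬝ᵥ (Qblk M).mulVec (a • onesV k)
        = a ^ 2 * (onesV k ⬝ᵥ M.mulVec (onesV k)) := by
      have : (M.mulVec (onesV k)) ⬝ᵥ onesV k = onesV k ⬝ᵥ M.mulVec (onesV k) :=
        dotProduct_comm _ _
      simp only [Qblk, star_trivial, smul_mulVec, mulVec_smul, vecMulVec_mulVec, dotProduct_smul,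
        smul_dotProduct, this, smul_eq_mul, MulOpposite.smul_eq_mul_unop, MulOpposite.unop_op]
      field_simp
    have : 0 < a ^ 2 * (onesV k ⬝ᵥ M.mulVec (onesV k)) := by positivity
    linarith

theorem blockDiag_posDef {m : ℕ} {ns : Fin m → ℕ}
    (S : ∀ s : Fin m, Matrix (Fin (ns s)) (Fin (ns s)) ℝ) (hS : ∀ s, (S s).PosDef) :
    (blockDiagonal' S).PosDef := by
  refine PosDef.of_dotProduct_mulVec_pos ?_ fun x hx => ?_
  · rw [IsHermitian, blockDiagonal'_conjTranspose]
    congr 1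
    funext s
    exact (hS s).1
  · have key : star x ⬝ᵥ (blockDiagonal' S).mulVec x
        = ∑ s, (star fun i => x ⟨s, i⟩) ⬝ᵥ (S s).mulVec (fun i => x ⟨s, i⟩) := by
      simp only [dotProduct, mulVec, Fintype.sum_sigma]
      refine Finset.sum_congr rfl fun s _ => Finset.sum_congr rfl fun i _ => ?_
      congr 1
      rw [Finset.sum_eq_single s]
      · simp [blockDiagonal'_apply_eq]
      · intro t _ hts
        refine Finset.sum_eq_zero fun j _ => ?_
        rw [blockDiagonal'_apply_ne _ _ _ hts.symm, zero_mul]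
      · simp
    rw [key]
    obtain ⟨⟨s, i⟩, hi⟩ := Function.ne_iff.1 hx
    refine Finset.sum_pos' (fun t _ => (hS t).posSemidef.dotProduct_mulVec_nonneg _)
      ⟨s, Finset.mem_univ _, (hS s).dotProduct_mulVec_pos ?_⟩
    intro h
    exact hi (congrFun h i)

/-- `Σ_ε B_D + Q` is symmetric positive definite and the saddle point matrix
`A_ε = [[A, Bᵀ],[B, −Σ_ε B_D − Q]]` is nonsingular; in particular `A_ε z = F` is uniquely
solvable for every right-hand side `F`. -/
theorem stmt11
    (m : ℕ) (hm : 1 ≤ m) (ns : Fin m → ℕ) (hns : ∀ s, 0 < ns s)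
    (M Bb : ∀ s : Fin m, Matrix (Fin (ns s)) (Fin (ns s)) ℝ)
    (hM : ∀ s, (M s).PosDef) (hBb : ∀ s, (Bb s).PosSemidef)
    (hker : ∀ s, LinearMap.ker (Bb s).mulVecLin = Submodule.span ℝ {onesV (ns s)})
    (n0 : ℕ) (hn0 : 1 ≤ n0)
    (A : Matrix ((Σ s, Fin (ns s)) ⊕ Fin n0) ((Σ s, Fin (ns s)) ⊕ Fin n0) ℝ)
    (hA : A.PosDef)
    (BD Q : Matrix (Σ s, Fin (ns s)) (Σ s, Fin (ns s)) ℝ)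
    (hBD : BD = blockDiagonal' Bb)
    (hQ : Q = blockDiagonal' fun s => Qblk (M s))
    (B : Matrix (Σ s, Fin (ns s)) ((Σ s, Fin (ns s)) ⊕ Fin n0) ℝ)
    (hB : B = fromCols BD 0)
    (ε : Fin m → ℝ) (hε : ∀ s, 0 < ε s)
    (Sig : Matrix (Σ s, Fin (ns s)) (Σ s, Fin (ns s)) ℝ)
    (hSig : Sig = blockDiagonal' fun s => ε s • (1 : Matrix (Fin (ns s)) (Fin (ns s)) ℝ))
    (Aε : Matrix (((Σ s, Fin (ns s)) ⊕ Fin n0) ⊕ (Σ s, Fin (ns s)))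
          (((Σ s, Fin (ns s)) ⊕ Fin n0) ⊕ (Σ s, Fin (ns s))) ℝ)
    (hAε : Aε = fromBlocks A Bᵀ B (-(Sig * BD) - Q)) :
    (Sig * BD + Q).PosDef ∧
    IsUnit Aε.det ∧
    ∀ F : (((Σ s, Fin (ns s)) ⊕ Fin n0) ⊕ (Σ s, Fin (ns s))) → ℝ,
      ∃! z, Aε.mulVec z = F := by
  have hS : (Sig * BD + Q).PosDef := by
    have : Sig * BD + Q = blockDiagonal' fun s => ε s • Bb s + Qblk (M s) := by
      rw [hSig, hBD, hQ, ← blockDiagonal'_mul, ← blockDiagonal'_add]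
      congr 1
      funext s
      simp
    rw [this]
    exact blockDiag_posDef _ fun s =>
      block_posDef (hns s) _ _ (hM s) (hBb s) (hker s) _ (hε s)
  have hdet : IsUnit Aε.det := by
    haveI : Invertible A := hA.isUnit.invertible
    rw [hAε, det_fromBlocks₁₁, invOf_eq_nonsing_inv]
    have hT : (Sig * BD + Q + B * A⁻¹ * Bᵀ).PosDef := by
      refine hS.add_posSemidef ?_
      simpa using hA.inv.posSemidef.mul_mul_conjTranspose_same B
    have heq : -(Sig * BD) - Q - B * A⁻¹ * Bᵀ = -(Sig * BD + Q + B * A⁻¹ * Bᵀ) := by abel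
    rw [heq]
    exact ((isUnit_iff_isUnit_det _).1 hA.isUnit).mul
      ((isUnit_iff_isUnit_det _).1 hT.isUnit.neg)
  refine ⟨hS, hdet, fun F => ⟨Aε⁻¹.mulVec F, ?_, fun z hz => ?_⟩⟩
  · simp [mulVec_mulVec, mul_nonsing_inv _ hdet]
  · rw [← hz, mulVec_mulVec, nonsing_inv_mul _ hdet, one_mulVec]
end

section
/- Let A be a real symmetric positive definite N×N matrix in block form A = [[A_DD, A_D0],[A_0D, A_00]] with A_DD of size n×n (N = n + n_0), and let B_D be a real symmetric positive semidefinite n×n matrix such that xᵀ B_D x ≤ (x,v)ᵀ A (x,v) for all x ∈ R^n and v ∈ R^{n_0}. Then, with S_00 = A_DD − A_D0 A_00^{−1} A_0D, one has the Loewner inequalities B_D ≼ S_00 and B_D S_00^{−1} B_D ≼ B_D; that is, S_0 := B_D S_00^{−1} B_D satisfies S_0 ≼ B_D. -/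
open Matrix

/-- if `xᵀ B_D x ≤ (x,v)ᵀ A (x,v)` for all `x, v`, then `B_D ≼ S_00` and
`S_0 := B_D S_00⁻¹ B_D ≼ B_D` in the Loewner order. -/
theorem stmt14
    (n n0 : ℕ)
    (ADD : Matrix (Fin n) (Fin n) ℝ) (AD0 : Matrix (Fin n) (Fin n0) ℝ)
    (A0D : Matrix (Fin n0) (Fin n) ℝ) (A00 : Matrix (Fin n0) (Fin n0) ℝ)
    (hA : (fromBlocks ADD AD0 A0D A00).PosDef)
    (BD : Matrix (Fin n) (Fin n) ℝ) (hBD : BD.PosSemidef)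
    (hquad : ∀ (x : Fin n → ℝ) (v : Fin n0 → ℝ),
      x ⬝ᵥ BD.mulVec x ≤
        Sum.elim x v ⬝ᵥ (fromBlocks ADD AD0 A0D A00).mulVec (Sum.elim x v)) :
    ((ADD - AD0 * A00⁻¹ * A0D) - BD).PosSemidef ∧
    (BD - BD * (ADD - AD0 * A00⁻¹ * A0D)⁻¹ * BD).PosSemidef := by
  obtain ⟨hDD, h1, h2, h00⟩ := isHermitian_fromBlocks_iff.1 hA.isHermitian
  subst h1
  have hA00 : A00.PosDef := by
    exact hA.submatrix (e := Sum.inr) Sum.inr_injective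
  letI : Invertible A00 := hA00.isUnit.invertible
  have hS0 := (PosDef.fromBlocks₂₂ ADD AD0 hA00).1 hA.posSemidef
  have hSu : IsUnit (ADD - AD0 * A00⁻¹ * AD0ᴴ) := by
    have := isUnit_fromBlocks_iff_of_invertible₂₂.1 hA.isUnit
    rwa [invOf_eq_nonsing_inv] at this
  have hS : (ADD - AD0 * A00⁻¹ * AD0ᴴ).PosDef := hS0.posDef_iff_isUnit.2 hSu
  have key : ((ADD - AD0 * A00⁻¹ * AD0ᴴ) - BD).PosSemidef := by
    rw [sub_right_comm]
    refine (PosDef.fromBlocks₂₂ (ADD - BD) AD0 hA00).1 ?_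
    refine .of_dotProduct_mulVec_nonneg
      (isHermitian_fromBlocks_iff.2 ⟨hDD.sub hBD.isHermitian, rfl, h2, h00⟩) fun z => ?_
    have h := hquad (z ∘ Sum.inl) (z ∘ Sum.inr)
    rw [← Sum.elim_comp_inl_inr z]
    simp only [fromBlocks_mulVec, star_trivial, Sum.elim_comp_inl, Sum.elim_comp_inr,
      sumElim_dotProduct_sumElim, dotProduct_add, sub_mulVec, dotProduct_sub] at h ⊢
    linarith
  refine ⟨key, ?_⟩
  generalize ADD - AD0 * A00⁻¹ * AD0ᴴ = S at hS key
  letI : Invertible S := hS.isUnit.invertible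
  have hB : BDᴴ = BD := hBD.isHermitian
  have := (PosDef.fromBlocks₂₂ BD BD hS).1 ?_
  · rwa [hB] at this
  refine .of_dotProduct_mulVec_nonneg
    (isHermitian_fromBlocks_iff.2 ⟨hB, rfl, conjTranspose_conjTranspose _, hS.isHermitian⟩)
    fun z => ?_
  have e1 := hBD.dotProduct_mulVec_nonneg (z ∘ Sum.inl + z ∘ Sum.inr)
  have e2 := key.dotProduct_mulVec_nonneg (z ∘ Sum.inr)
  rw [← Sum.elim_comp_inl_inr z, hB]
  simp only [fromBlocks_mulVec, star_trivial, Sum.elim_comp_inl, Sum.elim_comp_inr,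
      sumElim_dotProduct_sumElim, dotProduct_add, add_dotProduct, mulVec_add,
      sub_mulVec, dotProduct_sub] at e1 e2 ⊢
  linarith
end

section
/- Under the block setup, let A be a real symmetric positive definite N×N matrix in block form A = [[A_DD, A_D0],[A_0D, A_00]] with A_DD of size n×n (N = n + n_0, n_0 ≥ 1), and let C > 0. Assume the discrete extension estimate: for every x ∈ R^n there exists v ∈ R^{n_0} such that (x,v)ᵀ A (x,v) ≤ xᵀ B_D x + C²·xᵀ(B_D + Q)x. Then, with S_00 = A_DD − A_D0 A_00^{−1} A_0D, one has S_00 ≼ (1+C²)(B_D + Q) in the Loewner order, and consequently every eigenvalue μ of the pencil (B_D + Q, S_00) (i.e., every μ with (B_D+Q)x = μ S_00 x for some x ≠ 0) satisfies μ ≥ 1/(1+C²). -/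
open Matrix

lemma posSemidef_blk {m : ℕ} {ns : Fin m → ℕ}
    (X : ∀ s : Fin m, Matrix (Fin (ns s)) (Fin (ns s)) ℝ) (h : ∀ s, (X s).PosSemidef) :
    (blockDiagonal' X).PosSemidef := by
  refine PosSemidef.of_dotProduct_mulVec_nonneg ?_ ?_
  · unfold Matrix.IsHermitian
    rw [blockDiagonal'_conjTranspose]
    congr 1
    funext s
    exact (h s).isHermitian
  · intro x
    have key : star x ⬝ᵥ (blockDiagonal' X *ᵥ x) =
        ∑ s, star (fun i => x ⟨s, i⟩) ⬝ᵥ (X s *ᵥ (fun i => x ⟨s, i⟩)) := by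
      simp only [dotProduct, mulVec, Fintype.sum_sigma]
      refine Finset.sum_congr rfl fun s _ => Finset.sum_congr rfl fun i _ => ?_
      simp only [Pi.star_apply]
      congr 1
      rw [Finset.sum_eq_single s]
      · simp [blockDiagonal'_apply_eq]
      · intro t _ hts
        exact Finset.sum_eq_zero fun j _ => by
          rw [blockDiagonal'_apply_ne _ _ _ hts.symm, zero_mul]
      · simp
    rw [key]
    exact Finset.sum_nonneg fun s _ => (h s).dotProduct_mulVec_nonneg _

lemma posSemidef_Qblk {k : ℕ} (M : Matrix (Fin k) (Fin k) ℝ) (hM : M.PosDef) :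
    (Qblk M).PosSemidef := by
  unfold Qblk
  refine PosSemidef.smul ?_ ?_
  · simpa using posSemidef_vecMulVec_self_star (M.mulVec (onesV k))
  · have := hM.posSemidef.dotProduct_mulVec_nonneg (onesV k)
    simp only [star_trivial] at this
    exact inv_nonneg.mpr this

/-- under the discrete extension estimate, `S_00 ≼ (1+C²)(B_D + Q)`, and every
eigenvalue of the pencil `(B_D + Q, S_00)` is at least `1/(1+C²)`. -/
theorem stmt15
    (m : ℕ) (hm : 1 ≤ m) (ns : Fin m → ℕ) (hns : ∀ s, 0 < ns s)
    (M Bb : ∀ s : Fin m, Matrix (Fin (ns s)) (Fin (ns s)) ℝ)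
    (hM : ∀ s, (M s).PosDef) (hBb : ∀ s, (Bb s).PosSemidef)
    (hker : ∀ s, LinearMap.ker (Bb s).mulVecLin = Submodule.span ℝ {onesV (ns s)})
    (BD Q : Matrix (Σ s, Fin (ns s)) (Σ s, Fin (ns s)) ℝ)
    (hBD : BD = blockDiagonal' Bb)
    (hQ : Q = blockDiagonal' fun s => Qblk (M s))
    (n0 : ℕ) (hn0 : 1 ≤ n0)
    (ADD : Matrix (Σ s, Fin (ns s)) (Σ s, Fin (ns s)) ℝ)
    (AD0 : Matrix (Σ s, Fin (ns s)) (Fin n0) ℝ)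
    (A0D : Matrix (Fin n0) (Σ s, Fin (ns s)) ℝ)
    (A00 : Matrix (Fin n0) (Fin n0) ℝ)
    (hA : (fromBlocks ADD AD0 A0D A00).PosDef)
    (C : ℝ) (hC : 0 < C)
    (hext : ∀ x : (Σ s, Fin (ns s)) → ℝ, ∃ v : Fin n0 → ℝ,
      Sum.elim x v ⬝ᵥ (fromBlocks ADD AD0 A0D A00).mulVec (Sum.elim x v) ≤
        x ⬝ᵥ BD.mulVec x + C ^ 2 * (x ⬝ᵥ (BD + Q).mulVec x)) :
    ((1 + C ^ 2) • (BD + Q) - (ADD - AD0 * A00⁻¹ * A0D)).PosSemidef ∧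
    ∀ (μ : ℝ) (x : (Σ s, Fin (ns s)) → ℝ), x ≠ 0 →
      (BD + Q).mulVec x = μ • (ADD - AD0 * A00⁻¹ * A0D).mulVec x →
      1 / (1 + C ^ 2) ≤ μ := by
  have hQp : Q.PosSemidef := hQ ▸ posSemidef_blk _ fun s => posSemidef_Qblk _ (hM s)
  have hBp : BD.PosSemidef := hBD ▸ posSemidef_blk _ hBb
  have hH := hA.isHermitian
  rw [isHermitian_fromBlocks_iff] at hH
  obtain ⟨hDD, h0D, -, h00⟩ := hH
  have hD : A00.PosDef := by
    have := hA.submatrix (e := Sum.inr) Sum.inr_injective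
    exact this
  have hAi : (A00⁻¹).IsHermitian := hD.inv.isHermitian
  subst h0D
  have : Invertible A00 := hD.isUnit.invertible
  have schur : ∀ x v, Sum.elim x v ⬝ᵥ (fromBlocks ADD AD0 AD0ᴴ A00).mulVec (Sum.elim x v) =
      (v + (A00⁻¹ * AD0ᴴ) *ᵥ x) ⬝ᵥ (A00 *ᵥ (v + (A00⁻¹ * AD0ᴴ) *ᵥ x)) +
      x ⬝ᵥ ((ADD - AD0 * A00⁻¹ * AD0ᴴ) *ᵥ x) := by
    intro x v
    have := schur_complement_eq₂₂ ADD AD0 x v h00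
    simp only [star_trivial, ← dotProduct_mulVec] at this
    rw [this, add_comm v]
  set S := ADD - AD0 * A00⁻¹ * AD0ᴴ with hS
  have hSH : S.IsHermitian := by
    refine hDD.sub ?_
    exact isHermitian_mul_mul_conjTranspose _ hAi
  have hle : ∀ x, x ⬝ᵥ (S *ᵥ x) ≤ (1 + C ^ 2) * (x ⬝ᵥ ((BD + Q) *ᵥ x)) := by
    intro x
    obtain ⟨v, hv⟩ := hext x
    rw [schur] at hv
    have h1 := hD.posSemidef.dotProduct_mulVec_nonneg (v + (A00⁻¹ * AD0ᴴ) *ᵥ x)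
    have h2 := hQp.dotProduct_mulVec_nonneg x
    simp only [star_trivial] at h1 h2
    have h3 : x ⬝ᵥ ((BD + Q) *ᵥ x) = x ⬝ᵥ (BD *ᵥ x) + x ⬝ᵥ (Q *ᵥ x) := by
      rw [add_mulVec, dotProduct_add]
    linarith
  refine ⟨PosSemidef.of_dotProduct_mulVec_nonneg ?_ ?_, ?_⟩
  · exact ((hBp.add hQp).smul (a := 1 + C ^ 2) (by positivity)).isHermitian.sub hSH
  · intro x
    simp only [star_trivial, sub_mulVec, smul_mulVec, dotProduct_sub, dotProduct_smul, smul_eq_mul]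
    linarith [hle x]
  · intro μ x hx he
    have hpos : 0 < x ⬝ᵥ (S *ᵥ x) := by
      have h1 := schur x (-((A00⁻¹ * AD0ᴴ) *ᵥ x))
      have hne : Sum.elim x (-((A00⁻¹ * AD0ᴴ) *ᵥ x)) ≠ 0 := by
        intro h
        apply hx
        funext i
        exact congrFun h (Sum.inl i)
      have h2 := hA.dotProduct_mulVec_pos hne
      simp only [star_trivial] at h2
      rw [h1] at h2
      simpa using h2
    have h := hle x
    rw [he, dotProduct_smul, smul_eq_mul] at h
    rw [div_le_iff₀ (by positivity)]
    nlinarith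
end

section
/- Under the block setup, let A be a real symmetric positive definite N×N matrix in block form A = [[A_DD, A_D0],[A_0D, A_00]] with A_DD of size n×n (N = n + n_0, n_0 ≥ 1), and let C > 0. Assume that for every x ∈ R^n there exists v ∈ R^{n_0} such that (x,v)ᵀ A (x,v) ≤ xᵀ B_D x + C²·xᵀ(B_D + Q)x. Then, with S_00 = A_DD − A_D0 A_00^{−1} A_0D and S_0 = B_D S_00^{−1} B_D, one has B_D ≼ (1+C²)·S_0 in the Loewner order. -/
open Matrix

theorem aux_bd {m : ℕ} {ns : Fin m → ℕ} (F : ∀ s : Fin m, Matrix (Fin (ns s)) (Fin (ns s)) ℝ)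
    (y : (Σ s, Fin (ns s)) → ℝ) (s : Fin m) (i : Fin (ns s)) :
    (blockDiagonal' F *ᵥ y) ⟨s, i⟩ = (F s *ᵥ fun j => y ⟨s, j⟩) i := by
  simp only [mulVec, dotProduct, Fintype.sum_sigma]
  rw [Finset.sum_eq_single s]
  · simp [blockDiagonal'_apply_eq]
  · intro t _ ht
    apply Finset.sum_eq_zero
    intro j _
    rw [blockDiagonal'_apply_ne _ _ _ ht.symm, zero_mul]
  · simp

theorem aux_core {ι : Type*} [Fintype ι] [DecidableEq ι] (S B Q : Matrix ι ι ℝ)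
    (hS : S.PosDef) (hB : B.IsHermitian) (k c : ℝ) (hk : 0 < k)
    (h : ∀ x, x ⬝ᵥ S *ᵥ x ≤ k * (x ⬝ᵥ B *ᵥ x) + c * (x ⬝ᵥ Q *ᵥ x))
    (hy : ∀ x, ∃ y, B *ᵥ y = B *ᵥ x ∧ Q *ᵥ y = 0) :
    (k • (B * S⁻¹ * B) - B).PosSemidef := by
  have hBt : Bᵀ = B := by simpa [IsHermitian, conjTranspose_eq_transpose_of_trivial] using hB
  have hSt : Sᵀ = S := by
    simpa [IsHermitian, conjTranspose_eq_transpose_of_trivial] using hS.1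
  have hdet : IsUnit S.det := (isUnit_iff_isUnit_det S).1 hS.isUnit
  refine .of_dotProduct_mulVec_nonneg ?_ ?_
  · have : (k • (B * S⁻¹ * B) - B)ᵀ = k • (B * S⁻¹ * B) - B := by
      simp [transpose_sub, transpose_smul, transpose_mul, transpose_nonsing_inv, hBt, hSt,
        Matrix.mul_assoc]
    simpa [IsHermitian, conjTranspose_eq_transpose_of_trivial] using this
  · intro x
    obtain ⟨y, hy1, hy2⟩ := hy x
    have symB : ∀ a b : ι → ℝ, a ⬝ᵥ B *ᵥ b = (B *ᵥ a) ⬝ᵥ b := by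
      intro a b
      rw [dotProduct_mulVec, ← mulVec_transpose, hBt]
    have symS : ∀ a b : ι → ℝ, a ⬝ᵥ S *ᵥ b = (S *ᵥ a) ⬝ᵥ b := by
      intro a b
      rw [dotProduct_mulVec, ← mulVec_transpose, hSt]
    set z := B *ᵥ x with hz
    set w := S⁻¹ *ᵥ z with hw
    have hSw : S *ᵥ w = z := by
      rw [hw, mulVec_mulVec, mul_nonsing_inv _ hdet, one_mulVec]
    have h1 := h y
    rw [hy2, dotProduct_zero, mul_zero, add_zero, hy1] at h1
    have h2 := hS.posSemidef.dotProduct_mulVec_nonneg (k • w - y)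
    have h3 : y ⬝ᵥ z = x ⬝ᵥ z := by
      rw [hz, symB, hy1, dotProduct_comm]
    have e1 : w ⬝ᵥ S *ᵥ y = z ⬝ᵥ y := by rw [symS, hSw]
    simp only [star_trivial, mulVec_sub, mulVec_smul, hSw, dotProduct_sub, sub_dotProduct,
      smul_dotProduct, dotProduct_smul, smul_eq_mul, e1] at h2
    rw [dotProduct_comm z y, dotProduct_comm w z] at h2
    rw [h3] at h1 h2
    have e2 : x ⬝ᵥ (B * S⁻¹ * B) *ᵥ x = z ⬝ᵥ w := by
      rw [← mulVec_mulVec, ← mulVec_mulVec, symB]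
    simp only [star_trivial, sub_mulVec, smul_mulVec, dotProduct_sub, dotProduct_smul,
      smul_eq_mul, e2]
    rw [← hz]
    have : 0 ≤ k * (k * (z ⬝ᵥ w) - x ⬝ᵥ z) := by nlinarith
    exact nonneg_of_mul_nonneg_right this hk

/-- under the discrete extension estimate, `B_D ≼ (1+C²)·S_0` in the Loewner
order, where `S_0 = B_D S_00⁻¹ B_D`. -/
theorem stmt16
    (m : ℕ) (hm : 1 ≤ m) (ns : Fin m → ℕ) (hns : ∀ s, 0 < ns s)
    (M Bb : ∀ s : Fin m, Matrix (Fin (ns s)) (Fin (ns s)) ℝ)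
    (hM : ∀ s, (M s).PosDef) (hBb : ∀ s, (Bb s).PosSemidef)
    (hker : ∀ s, LinearMap.ker (Bb s).mulVecLin = Submodule.span ℝ {onesV (ns s)})
    (BD Q : Matrix (Σ s, Fin (ns s)) (Σ s, Fin (ns s)) ℝ)
    (hBD : BD = blockDiagonal' Bb)
    (hQ : Q = blockDiagonal' fun s => Qblk (M s))
    (n0 : ℕ) (hn0 : 1 ≤ n0)
    (ADD : Matrix (Σ s, Fin (ns s)) (Σ s, Fin (ns s)) ℝ)
    (AD0 : Matrix (Σ s, Fin (ns s)) (Fin n0) ℝ)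
    (A0D : Matrix (Fin n0) (Σ s, Fin (ns s)) ℝ)
    (A00 : Matrix (Fin n0) (Fin n0) ℝ)
    (hA : (fromBlocks ADD AD0 A0D A00).PosDef)
    (C : ℝ) (hC : 0 < C)
    (hext : ∀ x : (Σ s, Fin (ns s)) → ℝ, ∃ v : Fin n0 → ℝ,
      Sum.elim x v ⬝ᵥ (fromBlocks ADD AD0 A0D A00).mulVec (Sum.elim x v) ≤
        x ⬝ᵥ BD.mulVec x + C ^ 2 * (x ⬝ᵥ (BD + Q).mulVec x)) :
    ((1 + C ^ 2) • (BD * (ADD - AD0 * A00⁻¹ * A0D)⁻¹ * BD) - BD).PosSemidef := by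
  have hherm := hA.1
  rw [isHermitian_fromBlocks_iff] at hherm
  obtain ⟨hh1, hh2, hh3, hh4⟩ := hherm
  subst hh2
  have hA00 : A00.PosDef := by
    have := hA.submatrix (e := Sum.inr) Sum.inr_injective
    exact this
  let _ : Invertible A00 := hA00.isUnit.invertible
  have key : ∀ x v, Sum.elim x v ⬝ᵥ (fromBlocks ADD AD0 AD0ᴴ A00).mulVec (Sum.elim x v) =
      ((A00⁻¹ * AD0ᴴ) *ᵥ x + v) ⬝ᵥ A00 *ᵥ ((A00⁻¹ * AD0ᴴ) *ᵥ x + v) +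
      x ⬝ᵥ (ADD - AD0 * A00⁻¹ * AD0ᴴ) *ᵥ x := by
    intro x v
    have := schur_complement_eq₂₂ ADD AD0 (D := A00) x v hh4
    simpa only [star_trivial, dotProduct_mulVec] using this
  have hS : (ADD - AD0 * A00⁻¹ * AD0ᴴ).PosDef := by
    refine .of_dotProduct_mulVec_pos ?_ ?_
    · exact (IsHermitian.fromBlocks₂₂ ADD AD0 hh4).1 hA.1
    · intro x hx
      have h := hA.dotProduct_mulVec_pos (x := Sum.elim x (-((A00⁻¹ * AD0ᴴ) *ᵥ x))) (by
        intro h0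
        apply hx
        funext i
        exact congrFun h0 (Sum.inl i))
      rw [star_trivial, key] at h
      simpa using h
  refine aux_core _ BD Q hS ?_ (1 + C ^ 2) (C ^ 2) (by positivity) ?_ ?_
  · rw [hBD, isHermitian_blockDiagonal'_iff]
    exact fun s => (hBb s).1
  · intro x
    obtain ⟨v, hv⟩ := hext x
    rw [key] at hv
    have h0 := hA00.posSemidef.dotProduct_mulVec_nonneg ((A00⁻¹ * AD0ᴴ) *ᵥ x + v)
    rw [star_trivial] at h0
    rw [add_mulVec, dotProduct_add] at hv
    linarith
  · intro x
    have hB1 : ∀ s, Bb s *ᵥ onesV (ns s) = 0 := by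
      intro s
      have : onesV (ns s) ∈ LinearMap.ker (Bb s).mulVecLin := by
        rw [hker s]
        exact Submodule.mem_span_singleton_self _
      simpa using this
    have hpos : ∀ s, 0 < onesV (ns s) ⬝ᵥ M s *ᵥ onesV (ns s) := by
      intro s
      have := (hM s).dotProduct_mulVec_pos (x := onesV (ns s)) (by
        intro h
        have := congrFun h ⟨0, hns s⟩
        simp [onesV] at this)
      simpa using this
    let a : Fin m → ℝ := fun s => ((M s *ᵥ onesV (ns s)) ⬝ᵥ fun j => x ⟨s, j⟩) /
      (onesV (ns s) ⬝ᵥ M s *ᵥ onesV (ns s))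
    have hblk : ∀ s, (fun j => x ⟨s, j⟩ - a s) = (fun j => x ⟨s, j⟩) - a s • onesV (ns s) := by
      intro s
      funext j
      simp [onesV]
    refine ⟨fun p => x p - a p.1, ?_, ?_⟩
    · funext ⟨s, i⟩
      rw [hBD, aux_bd, aux_bd]
      simp only [hblk, mulVec_sub, mulVec_smul, hB1, smul_zero, sub_zero]
    · funext ⟨s, i⟩
      rw [hQ, aux_bd]
      simp only [hblk]
      have hz : (M s *ᵥ onesV (ns s)) ⬝ᵥ ((fun j => x ⟨s, j⟩) - a s • onesV (ns s)) = 0 := by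
        rw [dotProduct_sub, dotProduct_smul, dotProduct_comm _ (onesV (ns s)), smul_eq_mul,
          div_mul_cancel₀ _ (hpos s).ne', sub_self]
      rw [Qblk, smul_mulVec, vecMulVec_mulVec, hz]
      simp
end

section
/- Let 𝒜 be a real symmetric k×k matrix and let G_0, G be real symmetric positive definite k×k matrices with α_min·G_0 ≼ G ≼ α_max·G_0 for constants α_max ≥ α_min > 0. Suppose there are real numbers m_1 ≤ m_2 < 0 < m_3 ≤ m_4 such that every eigenvalue μ of the pencil (𝒜, G_0) (i.e., every μ with 𝒜x = μ G_0 x for some x ≠ 0) lies in [m_1, m_2] ∪ [m_3, m_4]. Then every eigenvalue of the pencil (𝒜, G) lies in [m_1/α_min, m_2/α_max] ∪ [m_3/α_max, m_4/α_min]. -/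
open Matrix

theorem aux_form {k : ℕ} (V G : Matrix (Fin k) (Fin k) ℝ) (u v : Fin k → ℝ) :
    (V *ᵥ u) ⬝ᵥ (G *ᵥ (V *ᵥ v)) = u ⬝ᵥ ((Vᵀ * G * V) *ᵥ v) := by
  rw [← vecMul_transpose V u, ← dotProduct_mulVec, mulVec_mulVec, mulVec_mulVec]

theorem aux_diag {k : ℕ} (A : Matrix (Fin k) (Fin k) ℝ) (hA : A.IsHermitian) :
    ∃ (U : Matrix (Fin k) (Fin k) ℝ) (d : Fin k → ℝ), Uᵀ * U = 1 ∧ Uᵀ * A * U = diagonal d := by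
  refine ⟨(hA.eigenvectorUnitary : Matrix (Fin k) (Fin k) ℝ), hA.eigenvalues, ?_, ?_⟩
  · have := Unitary.coe_star_mul_self hA.eigenvectorUnitary
    simpa [star_eq_conjTranspose] using this
  · have := hA.conjStarAlgAut_star_eigenvectorUnitary
    rw [Unitary.conjStarAlgAut_star_apply] at this
    have h2 : (RCLike.ofReal ∘ hA.eigenvalues : Fin k → ℝ) = hA.eigenvalues := by
      ext i; simp
    rw [h2] at this
    simpa [star_eq_conjTranspose] using this

theorem aux_simul {k : ℕ} (A G : Matrix (Fin k) (Fin k) ℝ) (hA : A.IsSymm) (hG : G.PosDef) :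
    ∃ (P : Matrix (Fin k) (Fin k) ℝ) (d : Fin k → ℝ),
      Pᵀ * G * P = 1 ∧ Pᵀ * A * P = diagonal d := by
  obtain ⟨V, e, hV, hVe⟩ := aux_diag G hG.1
  have hepos : ∀ i, 0 < e i := by
    intro i
    have hx : V *ᵥ Pi.single i 1 ≠ 0 := by
      intro h
      have h1 : Vᵀ *ᵥ (V *ᵥ Pi.single i 1) = 0 := by rw [h, mulVec_zero]
      rw [mulVec_mulVec, hV, one_mulVec] at h1
      have := congrFun h1 i
      simp at this
    have h := hG.dotProduct_mulVec_pos hx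
    have h2 : star (V *ᵥ Pi.single i (1:ℝ)) ⬝ᵥ G *ᵥ V *ᵥ Pi.single i 1
        = Pi.single i 1 ⬝ᵥ (Vᵀ * G * V) *ᵥ Pi.single i (1:ℝ) := by
      rw [star_trivial]
      exact aux_form _ _ _ _
    rw [h2, hVe] at h
    simpa using h
  set Q : Matrix (Fin k) (Fin k) ℝ := V * diagonal (fun i => (√(e i))⁻¹) with hQ
  have hQG : Qᵀ * G * Q = 1 := by
    have : Qᵀ * G * Q = diagonal (fun i => (√(e i))⁻¹) * (Vᵀ * G * V)
        * diagonal (fun i => (√(e i))⁻¹) := by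
      simp only [hQ, transpose_mul, diagonal_transpose, mul_assoc]
    rw [this, hVe, diagonal_mul_diagonal, diagonal_mul_diagonal, ← diagonal_one]
    congr 1
    ext i
    have h := Real.sqrt_pos.2 (hepos i)
    have h' := Real.mul_self_sqrt (hepos i).le
    field_simp
    nlinarith
  obtain ⟨U, d, hU, hUd⟩ := aux_diag (Qᵀ * A * Q) (by
    rw [IsHermitian, conjTranspose_eq_transpose_of_trivial]
    simp only [transpose_mul, transpose_transpose, hA.eq, mul_assoc])
  refine ⟨Q * U, d, ?_, ?_⟩
  · have : (Q * U)ᵀ * G * (Q * U) = Uᵀ * (Qᵀ * G * Q) * U := by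
      simp only [transpose_mul, mul_assoc]
    rw [this, hQG, mul_one, hU]
  · rw [← hUd]
    simp only [transpose_mul, mul_assoc]

theorem aux_pos {k : ℕ} (A G₀ G : Matrix (Fin k) (Fin k) ℝ)
    (hA : A.IsSymm) (hG₀ : G₀.PosDef) (hG : G.PosDef)
    (a b : ℝ) (ha : 0 < a) (hab : a ≤ b)
    (hL1 : (G - a • G₀).PosSemidef) (hL2 : (b • G₀ - G).PosSemidef)
    (m₃ m₄ : ℝ) (h3 : 0 < m₃) (h34 : m₃ ≤ m₄)
    (hloc : ∀ (μ : ℝ) (x : Fin k → ℝ), x ≠ 0 → A *ᵥ x = μ • G₀ *ᵥ x →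
      μ ≤ 0 ∨ (m₃ ≤ μ ∧ μ ≤ m₄))
    (μ : ℝ) (hμ : 0 < μ) (x : Fin k → ℝ) (hx : x ≠ 0) (hAx : A *ᵥ x = μ • G *ᵥ x) :
    m₃ / b ≤ μ ∧ μ ≤ m₄ / a := by
  have hb : 0 < b := ha.trans_le hab
  obtain ⟨P, d, hP, hPd⟩ := aux_simul A G₀ hA hG₀
  have hPinv : P * (Pᵀ * G₀) = 1 := mul_eq_one_comm.1 hP
  have hPinv' : (G₀ * P) * Pᵀ = 1 := mul_eq_one_comm.1 (by rw [← mul_assoc]; exact hP)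
  have hAP : A * P = G₀ * P * diagonal d := by
    rw [← hPd, ← mul_assoc, ← mul_assoc, hPinv', one_mul]
  have hAPv : ∀ c : Fin k → ℝ, A *ᵥ (P *ᵥ c) = G₀ *ᵥ (P *ᵥ (fun i => d i * c i)) := by
    intro c
    rw [mulVec_mulVec, hAP, ← mulVec_mulVec, ← mulVec_mulVec]
    congr 2
    ext i
    simp [mulVec_diagonal]
  have hGP : ∀ c c' : Fin k → ℝ, (P *ᵥ c) ⬝ᵥ (G₀ *ᵥ (P *ᵥ c')) = ∑ i, c i * c' i := by
    intro c c'
    rw [← vecMul_transpose, ← dotProduct_mulVec, mulVec_mulVec, mulVec_mulVec, hP,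
      one_mulVec]
    rfl
  have hd : ∀ i, d i ≤ 0 ∨ (m₃ ≤ d i ∧ d i ≤ m₄) := by
    intro i
    apply hloc (d i) (P *ᵥ Pi.single i 1)
    · intro h
      have := hGP (Pi.single i 1) (Pi.single i 1)
      rw [h] at this
      simp [Pi.single_apply] at this
    · rw [hAPv, ← mulVec_smul, ← mulVec_smul]
      congr 2
      ext j
      by_cases h : j = i
      · subst h; simp
      · simp [h]
  obtain ⟨c, rfl⟩ : ∃ c, x = P *ᵥ c :=
    ⟨(Pᵀ * G₀) *ᵥ x, by rw [mulVec_mulVec, hPinv, one_mulVec]⟩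
  set w := P *ᵥ (fun i => d i * c i) with hw
  set x := P *ᵥ c with hxdef
  have hGw : G₀ *ᵥ w = μ • G *ᵥ x := by rw [← hAx, hAPv]
  have hxx := hGP c c
  have hxw := hGP c (fun i => d i * c i)
  have hww := hGP (fun i => d i * c i) (fun i => d i * c i)
  rw [← hw, ← hxdef] at hxw
  rw [← hw] at hww
  rw [← hxdef] at hxx
  have hXpos : 0 < x ⬝ᵥ G *ᵥ x := by simpa using hG.dotProduct_mulVec_pos hx
  have hX0pos : 0 < x ⬝ᵥ G₀ *ᵥ x := by simpa using hG₀.dotProduct_mulVec_pos hx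
  have e1 : x ⬝ᵥ G₀ *ᵥ w = μ * (x ⬝ᵥ G *ᵥ x) := by rw [hGw, dotProduct_smul, smul_eq_mul]
  have e2 : w ⬝ᵥ G₀ *ᵥ w = μ * (w ⬝ᵥ G *ᵥ x) := by rw [hGw, dotProduct_smul, smul_eq_mul]
  have l1 : a * (x ⬝ᵥ G₀ *ᵥ x) ≤ x ⬝ᵥ G *ᵥ x := by
    have := hL1.dotProduct_mulVec_nonneg x
    simp only [star_trivial, sub_mulVec, smul_mulVec, dotProduct_sub, dotProduct_smul,
      smul_eq_mul] at this
    linarith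
  have l2 : w ⬝ᵥ G *ᵥ w ≤ b * (w ⬝ᵥ G₀ *ᵥ w) := by
    have := hL2.dotProduct_mulVec_nonneg w
    simp only [star_trivial, sub_mulVec, smul_mulVec, dotProduct_sub, dotProduct_smul,
      smul_eq_mul] at this
    linarith
  have r1 : x ⬝ᵥ G₀ *ᵥ w ≤ m₄ * (x ⬝ᵥ G₀ *ᵥ x) := by
    rw [hxw, hxx, Finset.mul_sum]
    refine Finset.sum_le_sum fun i _ => ?_
    have : d i ≤ m₄ := by rcases hd i with h | h <;> linarith [h3, h34]
    nlinarith [mul_self_nonneg (c i)]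
  have r2 : m₃ * (x ⬝ᵥ G₀ *ᵥ w) ≤ w ⬝ᵥ G₀ *ᵥ w := by
    rw [hxw, hww, Finset.mul_sum]
    refine Finset.sum_le_sum fun i _ => ?_
    have : m₃ * d i ≤ d i * d i := by rcases hd i with h | h <;> nlinarith
    nlinarith [mul_self_nonneg (c i)]
  have hsymm : x ⬝ᵥ G *ᵥ w = w ⬝ᵥ G *ᵥ x := by
    have hGt : Gᵀ = G := by
      have := hG.1.eq
      rwa [conjTranspose_eq_transpose_of_trivial] at this
    rw [dotProduct_comm, ← vecMul_transpose, hGt, ← dotProduct_mulVec]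
  have q : 0 ≤ (x - (1 / (μ * b)) • w) ⬝ᵥ G *ᵥ (x - (1 / (μ * b)) • w) := by
    simpa using hG.posSemidef.dotProduct_mulVec_nonneg (x - (1 / (μ * b)) • w)
  simp only [mulVec_sub, mulVec_smul, dotProduct_sub, sub_dotProduct, dotProduct_smul,
    smul_dotProduct, smul_eq_mul, hsymm] at q
  generalize x ⬝ᵥ G *ᵥ x = X at *
  generalize w ⬝ᵥ G *ᵥ x = Y at *
  generalize w ⬝ᵥ G *ᵥ w = Z at *
  generalize w ⬝ᵥ G₀ *ᵥ w = S at *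
  generalize x ⬝ᵥ G₀ *ᵥ x = X0 at *
  rw [e1] at r1 r2
  constructor
  · rw [div_le_iff₀ hb]
    have q2 : 0 ≤ (μ * b) * (μ * b) * X - 2 * (μ * b) * Y + Z := by
      have hmb : 0 < μ * b := by positivity
      have := mul_nonneg (mul_pos hmb hmb).le q
      have h : (μ * b) * (μ * b) * (X - 1 / (μ * b) * Y - (1 / (μ * b)) * (Y - 1 / (μ * b) * Z))
        = (μ * b) * (μ * b) * X - 2 * (μ * b) * Y + Z := by
        field_simp
        ring
      linarith
    have q3 : 0 ≤ b * (μ * X * (μ * b - m₃)) := by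
      subst e2
      nlinarith
    have q4 := nonneg_of_mul_nonneg_right q3 hb
    have q5 := nonneg_of_mul_nonneg_right q4 (by positivity)
    linarith
  · rw [le_div_iff₀ ha]
    have : 0 ≤ X0 * (m₄ - μ * a) := by nlinarith
    have := nonneg_of_mul_nonneg_right this hX0pos
    linarith



/-- if `α_min·G₀ ≼ G ≼ α_max·G₀` and every eigenvalue of the pencil `(𝒜, G₀)`
lies in `[m₁, m₂] ∪ [m₃, m₄]` with `m₁ ≤ m₂ < 0 < m₃ ≤ m₄`, then every eigenvalue of the
pencil `(𝒜, G)` lies in `[m₁/α_min, m₂/α_max] ∪ [m₃/α_max, m₄/α_min]`. -/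
theorem stmt17
    (k : ℕ) (𝒜 G₀ G : Matrix (Fin k) (Fin k) ℝ)
    (h𝒜 : 𝒜.IsSymm) (hG₀ : G₀.PosDef) (hG : G.PosDef)
    (αmin αmax : ℝ) (hαmin : 0 < αmin) (hα : αmin ≤ αmax)
    (hL1 : (G - αmin • G₀).PosSemidef) (hL2 : (αmax • G₀ - G).PosSemidef)
    (m₁ m₂ m₃ m₄ : ℝ) (h12 : m₁ ≤ m₂) (h2 : m₂ < 0) (h3 : 0 < m₃) (h34 : m₃ ≤ m₄)
    (hloc : ∀ (μ : ℝ) (x : Fin k → ℝ), x ≠ 0 → 𝒜.mulVec x = μ • G₀.mulVec x →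
      (m₁ ≤ μ ∧ μ ≤ m₂) ∨ (m₃ ≤ μ ∧ μ ≤ m₄)) :
    ∀ (μ : ℝ) (x : Fin k → ℝ), x ≠ 0 → 𝒜.mulVec x = μ • G.mulVec x →
      (m₁ / αmin ≤ μ ∧ μ ≤ m₂ / αmax) ∨ (m₃ / αmax ≤ μ ∧ μ ≤ m₄ / αmin) := by

  intro μ x hx hAx
  have hb : 0 < αmax := hαmin.trans_le hα
  rcases lt_trichotomy μ 0 with hμ | hμ | hμ
  · left
    have := aux_pos (-𝒜) G₀ G (by rw [IsSymm, transpose_neg, h𝒜.eq]) hG₀ hG αmin αmax hαmin hα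
      hL1 hL2 (-m₂) (-m₁) (by linarith) (by linarith)
      (by
        intro ν y hy h
        have h' : 𝒜 *ᵥ y = (-ν) • G₀ *ᵥ y := by
          rw [neg_smul, ← h, neg_mulVec, neg_neg]
        rcases hloc (-ν) y hy h' with h | h
        · right; constructor <;> linarith
        · left; linarith)
      (-μ) (by linarith) x hx (by rw [neg_mulVec, hAx, neg_smul])
    rw [neg_div, neg_div] at this
    constructor <;> linarith
  · subst hμ
    rcases hloc 0 x hx (by rw [hAx, zero_smul, zero_smul]) with h | h <;> linarith
  · right
    refine aux_pos 𝒜 G₀ G h𝒜 hG₀ hG αmin αmax hαmin hα hL1 hL2 m₃ m₄ h3 h34 ?_ μ hμ x hx hAx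
    intro ν y hy h
    rcases hloc ν y hy h with h | h
    · left; linarith
    · right; exact h
end
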